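/- Let T > 0, let a : ℝ → ℝ be T-periodic and locally integrable satisfying condition (a*), and for μ > 0 set a_μ(t) = a⁺(t) − μ a⁻(t), where a⁺ and a⁻ are the positive and negative parts of a. Let g ∈ C¹([0,∞)) satisfy (g*) and (gs). Then there exists μ* > 0 such that for every μ > μ* the equation u'' + a_μ(t) g(u) = 0 has at least 2^m − 1 distinct positive T-periodic solutions. -/

import Mathlib

open MeasureTheory Set Filter

/-- `u` is a solution of `u'' + F(t,u) = 0`: `u` is of class `C¹` and its derivative `u'`
is locally absolutely continuous (it is the integral of a locally integrable function),
with `u'' + F(t, u(t)) = 0` for a.e. `t`. -/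
def IsSol (F : ℝ → ℝ → ℝ) (u : ℝ → ℝ) : Prop :=
  ∃ u' : ℝ → ℝ,
    (∀ t, HasDerivAt u (u' t) t) ∧
    MeasureTheory.LocallyIntegrable (fun s => F s (u s)) MeasureTheory.volume ∧
    ∀ t, u' t = u' 0 - ∫ s in (0:ℝ)..t, F s (u s)

/-- `q ≻ 0` on `I` : `q ≥ 0` a.e. on `I` and `q ≢ 0` on `I`. -/
def PosOn (q : ℝ → ℝ) (I : Set ℝ) : Prop :=
  (∀ᵐ t ∂(MeasureTheory.volume.restrict I), 0 ≤ q t) ∧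
  ¬ (∀ᵐ t ∂(MeasureTheory.volume.restrict I), q t = 0)

/-- Condition `(q*)`: `[0,T]` splits into `m` closed intervals where `q ≻ 0`
separated by `m` closed intervals where `q ≺ 0`. -/
def SignCond (q : ℝ → ℝ) (T : ℝ) (m : ℕ) : Prop :=
  ∃ σ : ℕ → ℝ, σ 0 = 0 ∧ σ (2*m) = T ∧ (∀ i < 2*m, σ i < σ (i+1)) ∧
    (∀ i < m, PosOn q (Set.Icc (σ (2*i)) (σ (2*i+1)))) ∧
    (∀ i < m, PosOn (fun t => - q t) (Set.Icc (σ (2*i+1)) (σ (2*i+2))))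

/-- A subharmonic solution of order `k`: `kT`-periodic but not `ℓT`-periodic
for `ℓ = 1, …, k-1`. -/
def IsSubharmonic (u : ℝ → ℝ) (T : ℝ) (k : ℕ) : Prop :=
  Function.Periodic u (k * T) ∧ ∀ ℓ : ℕ, 1 ≤ ℓ → ℓ < k → ¬ Function.Periodic u (ℓ * T)

/-- `u` and `v` belong to the same periodicity class. -/
def SameClass (u v : ℝ → ℝ) (T : ℝ) : Prop :=
  ∃ ℓ : ℤ, ∀ t, v t = u (t + ℓ * T)

/- The nonlinearity is truncated linearly above a large level `R` and vanishes below `0`, so the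
equation is globally well posed and a trajectory that becomes negative stays negative. Fix a small
level `r`. On an interval where `a ≥ 0`, superlinearity at infinity keeps nonnegative trajectories
below `R`. A trajectory that peaks exactly at height `r` on such an interval leaves it almost flat,
because `g` is superlinear at `0`, and if `μ` is large the next interval where `a ≤ 0` throws it
above `R`, after which it becomes negative. Hence a trajectory that returns at time `T` to its
nonnegative initial position stays below `R`, solves the original equation, and its peak on each
positive interval differs from `r`. For every nonempty set `S` of positive intervals, the
Poincaré–Miranda theorem applied to a planar shooting family gives a closed trajectory whose peak
exceeds `r` exactly on the intervals of `S`; there are `2 ^ m - 1` such sets. -/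

section PoincareMiranda

theorem exists_continuous_exp_eq {X : Type*} [TopologicalSpace X] [SimplyConnectedSpace X]
    [LocallyPathConnectedSpace X] {F : X → ℂ} (hF : Continuous F) (hF0 : ∀ x, F x ≠ 0) (x₀ : X) :
    ∃ ℓ : X → ℂ, Continuous ℓ ∧ (∀ x, Complex.exp (ℓ x) = F x) ∧ ℓ x₀ = Complex.log (F x₀) := by
  obtain ⟨ℓ, ⟨hx₀, hℓ⟩, -⟩ := Complex.isCoveringMap_exp.existsUnique_continuousMap_lifts
    (⟨fun x => ⟨F x, hF0 x⟩, hF.subtype_mk _⟩ : C(X, {z : ℂ // z ≠ 0}))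
    (a₀ := x₀) (e₀ := Complex.log (F x₀)) (Subtype.ext (Complex.exp_log (hF0 x₀)))
  exact ⟨ℓ, ℓ.continuous, fun x => congrArg Subtype.val (congrFun hℓ x), hx₀⟩

variable {X : Type*} [TopologicalSpace X] {s : Set X} {φ : X → ℝ} {x y : X}

theorem abs_le_pi_div_two_of_cos_nonneg (hs : IsPreconnected s) (hφ : ContinuousOn φ s)
    (hcos : ∀ z ∈ s, 0 ≤ Real.cos (φ z)) (hx : x ∈ s) (hy : y ∈ s) (h : |φ x| ≤ Real.pi / 2) :
    |φ y| ≤ Real.pi / 2 := by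
  by_contra! hlt
  have hpi := Real.pi_pos
  obtain ⟨z, hz, hzφ : |φ z| = _⟩ := hs.intermediate_value hx hy hφ.abs
    (show min |φ y| Real.pi ∈ Icc |φ x| |φ y| from
      ⟨le_min (h.trans hlt.le) (by linarith), min_le_left _ _⟩)
  have hz0 := hcos z hz
  rw [← Real.cos_abs, hzφ] at hz0
  exact hz0.not_gt (Real.cos_neg_of_pi_div_two_lt_of_lt (lt_min hlt (by linarith))
    ((min_le_right _ _).trans_lt (by linarith)))

theorem mem_Icc_zero_pi_div_two_of_cos_nonneg (hs : IsPreconnected s) (hφ : ContinuousOn φ s)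
    (hcos : ∀ z ∈ s, 0 ≤ Real.cos (φ z)) (hx : x ∈ s) (hy : y ∈ s)
    (h : φ x ∈ Icc (-(Real.pi / 2)) 0) (hsin : 0 ≤ Real.sin (φ y)) :
    φ y ∈ Icc 0 (Real.pi / 2) := by
  have hpi := Real.pi_pos
  have hy' := abs_le.1 (abs_le_pi_div_two_of_cos_nonneg hs hφ hcos hx hy
    (abs_le.2 ⟨h.1, by linarith [h.2]⟩))
  refine ⟨?_, hy'.2⟩
  by_contra! hneg
  exact hsin.not_gt (Real.sin_neg_of_neg_of_neg_pi_lt hneg (by linarith))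

theorem corner_angle_notMem_Icc {a b c d : ℝ} (hab : a ≤ b) (hcd : c ≤ d) {ψ : ℝ × ℝ → ℝ}
    (hψ : Continuous ψ) (hright : ∀ y ∈ Icc c d, 0 ≤ Real.cos (ψ (b, y)))
    (htop : ∀ x ∈ Icc a b, 0 ≤ Real.sin (ψ (x, d)))
    (hleft : ∀ y ∈ Icc c d, Real.cos (ψ (a, y)) ≤ 0)
    (hbot : ∀ x ∈ Icc a b, Real.sin (ψ (x, c)) ≤ 0) : ψ (b, c) ∉ Icc (-(Real.pi / 2)) 0 := by
  intro h₀
  have ha := left_mem_Icc.2 hab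
  have hb := right_mem_Icc.2 hab
  have hc := left_mem_Icc.2 hcd
  have hd := right_mem_Icc.2 hcd
  have h₁ : ψ (b, d) ∈ Icc 0 (Real.pi / 2) :=
    mem_Icc_zero_pi_div_two_of_cos_nonneg (φ := fun y => ψ (b, y)) isPreconnected_Icc
      (by fun_prop) hright hc hd h₀ (htop b hb)
  have h₂ : ψ (a, d) - Real.pi / 2 ∈ Icc 0 (Real.pi / 2) :=
    mem_Icc_zero_pi_div_two_of_cos_nonneg (φ := fun x => ψ (x, d) - Real.pi / 2)
      isPreconnected_Icc (by fun_prop)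
      (fun x hx => by simpa only [Real.cos_sub_pi_div_two] using htop x hx) hb ha
      ⟨by linarith [h₁.1], by linarith [h₁.2]⟩
      (by simpa only [Real.sin_sub_pi_div_two, Left.nonneg_neg_iff] using hleft d hd)
  have h₃ : ψ (a, c) - Real.pi ∈ Icc 0 (Real.pi / 2) :=
    mem_Icc_zero_pi_div_two_of_cos_nonneg (φ := fun y => ψ (a, y) - Real.pi)
      isPreconnected_Icc (by fun_prop)
      (fun y hy => by simpa only [Real.cos_sub_pi, Left.nonneg_neg_iff] using hleft y hy) hd hc
      ⟨by linarith [h₂.1], by linarith [h₂.2]⟩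
      (by simpa only [Real.sin_sub_pi, Left.nonneg_neg_iff] using hbot a ha)
  have h₄ : ψ (b, c) - Real.pi - Real.pi / 2 ∈ Icc 0 (Real.pi / 2) :=
    mem_Icc_zero_pi_div_two_of_cos_nonneg (φ := fun x => ψ (x, c) - Real.pi - Real.pi / 2)
      isPreconnected_Icc (by fun_prop)
      (fun x hx => by
        simpa only [Real.cos_sub_pi_div_two, Real.sin_sub_pi, Left.nonneg_neg_iff] using hbot x hx)
      ha hb ⟨by linarith [h₃.1], by linarith [h₃.2]⟩
      (by simpa only [Real.sin_sub_pi_div_two, Real.cos_sub_pi, neg_neg] using hright c hc)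
  linarith [h₄.1, h₀.2, Real.pi_pos]

/- If there is no common zero, `f₁ + i f₂` has a continuous argument `ψ`, and the sign conditions
make `ψ` increase by a full turn along the boundary of the rectangle. -/
theorem poincare_miranda {a b c d : ℝ} (hab : a ≤ b) (hcd : c ≤ d) {f₁ f₂ : ℝ × ℝ → ℝ}
    (h₁ : ContinuousOn f₁ (Icc a b ×ˢ Icc c d)) (h₂ : ContinuousOn f₂ (Icc a b ×ˢ Icc c d))
    (hleft : ∀ y ∈ Icc c d, f₁ (a, y) ≤ 0) (hright : ∀ y ∈ Icc c d, 0 ≤ f₁ (b, y))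
    (hbot : ∀ x ∈ Icc a b, f₂ (x, c) ≤ 0) (htop : ∀ x ∈ Icc a b, 0 ≤ f₂ (x, d)) :
    ∃ p ∈ Icc a b ×ˢ Icc c d, f₁ p = 0 ∧ f₂ p = 0 := by
  by_contra! hno
  let ρ : ℝ × ℝ → ℝ × ℝ := fun p => (projIcc a b hab p.1, projIcc c d hcd p.2)
  have hρ : ∀ p, ρ p ∈ Icc a b ×ˢ Icc c d := fun p => ⟨Subtype.coe_prop _, Subtype.coe_prop _⟩
  have hρc : Continuous ρ := by fun_prop
  have hρid : ∀ x ∈ Icc a b, ∀ y ∈ Icc c d, ρ (x, y) = (x, y) := fun x hx y hy => by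
    simp only [ρ, projIcc_of_mem hab hx, projIcc_of_mem hcd hy]
  obtain ⟨ℓ, hℓ, hexp, hlog⟩ := exists_continuous_exp_eq
    (F := fun p => Complex.equivRealProdCLM.symm (f₁ (ρ p), f₂ (ρ p)))
    (Complex.equivRealProdCLM.symm.continuous.comp
      ((h₁.comp_continuous hρc hρ).prodMk (h₂.comp_continuous hρc hρ)))
    (fun p h0 => hno _ (hρ p) (congrArg Complex.re h0) (congrArg Complex.im h0)) (b, c)
  let ψ : ℝ × ℝ → ℝ := fun p => (ℓ p).im
  have hψ : Continuous ψ := Complex.continuous_im.comp hℓ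
  have hcos : ∀ x ∈ Icc a b, ∀ y ∈ Icc c d,
      f₁ (x, y) = Real.exp (ℓ (x, y)).re * Real.cos (ψ (x, y)) := fun x hx y hy => by
    rw [← Complex.exp_re, hexp, hρid x hx y hy]; rfl
  have hsin : ∀ x ∈ Icc a b, ∀ y ∈ Icc c d,
      f₂ (x, y) = Real.exp (ℓ (x, y)).re * Real.sin (ψ (x, y)) := fun x hx y hy => by
    rw [← Complex.exp_im, hexp, hρid x hx y hy]; rfl
  have hpos : ∀ p, 0 < Real.exp (ℓ p).re := fun p => Real.exp_pos _
  have ha := left_mem_Icc.2 hab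
  have hb := right_mem_Icc.2 hab
  have hc := left_mem_Icc.2 hcd
  have hd := right_mem_Icc.2 hcd
  refine corner_angle_notMem_Icc hab hcd hψ
    (fun y hy => (mul_nonneg_iff_of_pos_left (hpos _)).1 (hcos b hb y hy ▸ hright y hy))
    (fun x hx => (mul_nonneg_iff_of_pos_left (hpos _)).1 (hsin x hx d hd ▸ htop x hx))
    (fun y hy => nonpos_of_mul_nonpos_right (hcos a ha y hy ▸ hleft y hy) (hpos _))
    (fun x hx => nonpos_of_mul_nonpos_right (hsin x hx c hc ▸ hbot x hx) (hpos _)) ?_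
  have harg : ψ (b, c) = Complex.arg (Complex.equivRealProdCLM.symm (f₁ (b, c), f₂ (b, c))) := by
    simp only [ψ, hlog, hρid b hb c hc, Complex.log_im]
  rw [harg]
  refine ⟨(abs_le.1 (Complex.abs_arg_le_pi_div_two_iff.2 (hright c hc))).1, ?_⟩
  rcases (hbot b hb).lt_or_eq with him | him
  · exact (Complex.arg_neg_iff.2 him).le
  · exact (Complex.arg_eq_zero_iff.2 ⟨hright c hc, him⟩).le

end PoincareMiranda

section Itinerary

variable {X : Type*} [TopologicalSpace X]

theorem exists_continuous_eq_of_le_and_pos_of_lt {M H : X → ℝ} {r : ℝ} (hM : Continuous M)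
    (hH : Continuous H) (h : ∀ z, M z = r → 0 ≤ H z) :
    ∃ H' : X → ℝ, Continuous H' ∧ (∀ z, M z ≤ r → H' z = H z) ∧ ∀ z, r < M z → 0 < H' z := by
  refine ⟨fun z => if M z ≤ r then H z else max (H z) 0 + (M z - r),
    hH.if_le (by fun_prop) hM continuous_const fun z hz => ?_, fun z hz => if_pos hz,
    fun z hz => ?_⟩
  · rw [hz, sub_self, add_zero, max_eq_left (h z hz)]
  · simp only [if_neg hz.not_ge]
    exact add_pos_of_nonneg_of_pos (le_max_right _ _) (sub_pos.2 hz)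

theorem exists_continuous_zeros_on_side (P : Prop) {M H : X → ℝ} {D B : Set X} {r : ℝ}
    (hM : Continuous M) (hH : Continuous H) (h : ∀ z, M z = r → 0 ≤ H z)
    (hD : ∀ z ∈ D, M z < r ∧ H z ≤ 0) (hB : ∀ z ∈ B, r < M z ∧ H z ≤ 0) :
    ∃ H' : X → ℝ, Continuous H' ∧ (∀ z ∈ D, H' z ≤ 0) ∧ (∀ z ∈ B, 0 ≤ H' z) ∧
      ∀ z, H' z = 0 → H z = 0 ∧ (P → r ≤ M z) ∧ (¬P → M z ≤ r) := by
  by_cases hP : P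
  · obtain ⟨H', hH', heq, hpos⟩ := exists_continuous_eq_of_le_and_pos_of_lt (r := -r) hM.neg hH
      fun z hz => h z (neg_injective hz)
    refine ⟨-H', hH'.neg, fun z hz => (neg_neg_of_pos (hpos z (neg_lt_neg (hD z hz).1))).le,
      fun z hz => ?_, fun z hz => ?_⟩
    · exact neg_nonneg.2 ((heq z (neg_le_neg (hB z hz).1.le)).trans_le (hB z hz).2)
    · have hz0 : H' z = 0 := neg_eq_zero.1 hz
      have hr : r ≤ M z := not_lt.1 fun hlt => (hpos z (neg_lt_neg hlt)).ne' hz0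
      exact ⟨(heq z (neg_le_neg hr)).symm.trans hz0, fun _ => hr, fun hn => absurd hP hn⟩
  · obtain ⟨H', hH', heq, hpos⟩ := exists_continuous_eq_of_le_and_pos_of_lt hM hH h
    refine ⟨H', hH', fun z hz => (heq z (hD z hz).1.le).trans_le (hD z hz).2,
      fun z hz => (hpos z (hB z hz).1).le, fun z hz => ?_⟩
    have hr : M z ≤ r := not_lt.1 fun hlt => (hpos z hlt).ne' hz
    exact ⟨(heq z hr).symm.trans hz, fun hp => absurd hp hP, fun _ => hr⟩

/- Working backwards in `k`, the current function is made positive on the wrong side of the level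
`M k = r`, and the result is negated when `k ∈ S`: it is then again `≤ 0` on `D k` and `≥ 0` on
`B k`. -/
theorem exists_continuous_itinerary {m : ℕ} {M : ℕ → X → ℝ} {D B : ℕ → Set X} {f : X → ℝ} {r : ℝ}
    (S : Set ℕ) (hM : ∀ k < m, Continuous (M k)) (hf : Continuous f)
    (hDlt : ∀ k < m, ∀ z ∈ D k, M k z < r) (hD : ∀ k < m, D k ⊆ D (k + 1))
    (hBgt : ∀ k < m, ∀ z ∈ B k, r < M k z) (hB : ∀ k < m, B k ⊆ D (k + 1))
    (hMeq : ∀ k < m, ∀ z, M k z = r → z ∈ B (k + 1))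
    (hfD : ∀ z ∈ D m, f z ≤ 0) (hfB : ∀ z ∈ B m, 0 ≤ f z) :
    ∃ H : X → ℝ, Continuous H ∧ (∀ z ∈ D 0, H z ≤ 0) ∧ (∀ z ∈ B 0, 0 ≤ H z) ∧
      ∀ z, H z = 0 → f z = 0 ∧ ∀ k < m, (k ∈ S → r ≤ M k z) ∧ (k ∉ S → M k z ≤ r) := by
  induction m generalizing M D B S with
  | zero => exact ⟨f, hf, hfD, hfB, fun z hz => ⟨hz, fun k hk => absurd hk k.not_lt_zero⟩⟩
  | succ m ih =>
    obtain ⟨H, hH, hHD, hHB, hHz⟩ := ih (M := fun k => M (k + 1)) (D := fun k => D (k + 1))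
      (B := fun k => B (k + 1)) {k | k + 1 ∈ S} (fun k hk => hM _ (by omega))
      (fun k hk => hDlt _ (by omega)) (fun k hk => hD _ (by omega))
      (fun k hk => hBgt _ (by omega)) (fun k hk => hB _ (by omega))
      (fun k hk => hMeq _ (by omega)) hfD hfB
    have hm := m.succ_pos
    obtain ⟨H', hH', hHD', hHB', hHz'⟩ := exists_continuous_zeros_on_side (0 ∈ S) (hM 0 hm) hH
      (fun z hz => hHB z (hMeq 0 hm z hz))
      (fun z hz => ⟨hDlt 0 hm z hz, hHD z (hD 0 hm hz)⟩)
      (fun z hz => ⟨hBgt 0 hm z hz, hHD z (hB 0 hm hz)⟩)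
    refine ⟨H', hH', hHD', hHB', fun z hz => ⟨(hHz z (hHz' z hz).1).1, fun k hk => ?_⟩⟩
    cases k with
    | zero => exact (hHz' z hz).2
    | succ k => exact (hHz z (hHz' z hz).1).2 k (by omega)

end Itinerary

section Caratheodory

open scoped BoundedContinuousFunction

/-- The Bielecki weight `t ↦ exp (2 |∫_{t₀}^t l|)`, for which the integral operator of an equation
with Lipschitz rate `l` is a contraction on the whole line. -/
noncomputable def expWeight (l : ℝ → ℝ) (t₀ t : ℝ) : ℝ :=
  Real.exp (2 * |∫ s in t₀..t, l s|)

section Weight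

variable {l : ℝ → ℝ}

theorem one_le_expWeight (l : ℝ → ℝ) (t₀ t : ℝ) : 1 ≤ expWeight l t₀ t :=
  Real.one_le_exp (by positivity)

theorem expWeight_pos (l : ℝ → ℝ) (t₀ t : ℝ) : 0 < expWeight l t₀ t :=
  Real.exp_pos _

theorem continuous_expWeight (hl : ∀ a b, IntervalIntegrable l volume a b) (t₀ : ℝ) :
    Continuous (expWeight l t₀) := by
  have := intervalIntegral.continuous_primitive hl t₀
  unfold expWeight
  fun_prop

theorem locallyIntegrable_of_intervalIntegrable (hl : ∀ a b, IntervalIntegrable l volume a b) :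
    LocallyIntegrable l volume := fun t =>
  ⟨Icc (t - 1) (t + 1), Icc_mem_nhds (by linarith) (by linarith),
    (intervalIntegrable_iff_integrableOn_Icc_of_le (by linarith)).1 (hl _ _)⟩

theorem monotone_primitive (hl : ∀ a b, IntervalIntegrable l volume a b) (hl₀ : ∀ t, 0 ≤ l t)
    (t₀ : ℝ) : Monotone fun t => ∫ s in t₀..t, l s := fun t t' htt' => by
  have hsub := intervalIntegral.integral_interval_sub_left (hl t₀ t') (hl t₀ t)
  have hnonneg := intervalIntegral.integral_nonneg (μ := volume) htt' fun s _ => hl₀ s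
  linarith

theorem integral_mul_exp_primitive_le (hl : ∀ a b, IntervalIntegrable l volume a b)
    (hl₀ : ∀ t, 0 ≤ l t) {κ : ℝ} (hκ : κ ≠ 0) (t₀ : ℝ) {a b : ℝ} (hab : a ≤ b) :
    ∫ s in a..b, l s * Real.exp (κ * ∫ z in t₀..s, l z) ≤
      (Real.exp (κ * ∫ z in t₀..b, l z) - Real.exp (κ * ∫ z in t₀..a, l z)) / κ := by
  let L : ℝ → ℝ := fun t => ∫ s in t₀..t, l s
  let F : ℝ → ℝ := fun t => Real.exp (κ * L t) / κ
  have hF : Monotone F := fun t t' htt' => by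
    have hL := monotone_primitive hl hl₀ t₀ htt'
    rcases hκ.lt_or_gt with hneg | hpos
    · exact div_le_div_of_nonpos_of_le hneg.le
        (Real.exp_le_exp.2 (mul_le_mul_of_nonpos_left hL hneg.le))
    · exact div_le_div_of_nonneg_right
        (Real.exp_le_exp.2 (mul_le_mul_of_nonneg_left hL hpos.le)) hpos.le
  have hderiv : ∀ᵐ s, deriv F s = l s * Real.exp (κ * L s) := by
    filter_upwards [LocallyIntegrable.ae_hasDerivAt_integral
      (locallyIntegrable_of_intervalIntegrable hl)] with s hs
    rw [(((hs t₀).const_mul κ).exp.div_const κ).deriv]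
    field_simp
    exact mul_comm _ _
  have hmem := (hF.monotoneOn (uIcc a b)).intervalIntegral_deriv_mem_uIcc
  rw [uIcc_of_le (sub_nonneg.2 (hF hab)),
    intervalIntegral.integral_congr_ae (hderiv.mono fun s hs _ => hs)] at hmem
  exact hmem.2.trans_eq (sub_div _ _ _).symm

theorem abs_integral_mul_expWeight_le (hl : ∀ a b, IntervalIntegrable l volume a b)
    (hl₀ : ∀ t, 0 ≤ l t) (t₀ t : ℝ) :
    |∫ s in t₀..t, l s * expWeight l t₀ s| ≤ expWeight l t₀ t / 2 := by
  have hL := monotone_primitive hl hl₀ t₀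
  have hL₀ : ∫ s in t₀..t₀, l s = 0 := intervalIntegral.integral_same
  have hnonneg : ∀ s, 0 ≤ l s * expWeight l t₀ s := fun s =>
    mul_nonneg (hl₀ s) (expWeight_pos l t₀ s).le
  rcases le_total t₀ t with htt₀ | htt₀
  · have hW : ∀ s ∈ uIcc t₀ t, expWeight l t₀ s = Real.exp (2 * ∫ z in t₀..s, l z) :=
      fun s hs => by
        rw [expWeight, abs_of_nonneg (hL₀.ge.trans (hL (uIcc_of_le htt₀ ▸ hs).1))]
    have hle := integral_mul_exp_primitive_le hl hl₀ two_ne_zero t₀ htt₀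
    rw [abs_of_nonneg (intervalIntegral.integral_nonneg htt₀ fun s _ => hnonneg s),
      intervalIntegral.integral_congr fun s hs => congrArg (l s * ·) (hW s hs),
      hW t right_mem_uIcc]
    exact hle.trans (by gcongr; exact sub_le_self _ (Real.exp_pos _).le)
  · have hW : ∀ s ∈ uIcc t t₀, expWeight l t₀ s = Real.exp (-2 * ∫ z in t₀..s, l z) :=
      fun s hs => by
        rw [expWeight, abs_of_nonpos ((hL (uIcc_of_le htt₀ ▸ hs).2).trans hL₀.le),
          mul_neg, neg_mul]
    have hle := integral_mul_exp_primitive_le hl hl₀ (neg_ne_zero.2 two_ne_zero) t₀ htt₀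
    rw [intervalIntegral.integral_symm, abs_neg,
      abs_of_nonneg (intervalIntegral.integral_nonneg htt₀ fun s _ => hnonneg s),
      intervalIntegral.integral_congr fun s hs => congrArg (l s * ·) (hW s hs),
      hW t left_mem_uIcc]
    refine hle.trans ?_
    rw [div_neg, ← neg_div, neg_sub]
    gcongr
    exact sub_le_self _ (Real.exp_pos _).le

theorem norm_integral_le_of_norm_le_expWeight {E : Type*} [NormedAddCommGroup E] [NormedSpace ℝ E]
    (hl : ∀ a b, IntervalIntegrable l volume a b) (hl₀ : ∀ t, 0 ≤ l t) {t₀ t C : ℝ} (hC : 0 ≤ C)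
    {h : ℝ → E} (hh : ∀ s ∈ uIoc t₀ t, ‖h s‖ ≤ C * (l s * expWeight l t₀ s)) :
    ‖∫ s in t₀..t, h s‖ ≤ C / 2 * expWeight l t₀ t := by
  calc ‖∫ s in t₀..t, h s‖ ≤ |∫ s in t₀..t, C * (l s * expWeight l t₀ s)| :=
        intervalIntegral.norm_integral_le_abs_of_norm_le
          (ae_restrict_of_forall_mem measurableSet_uIoc hh)
          (((hl _ _).mul_continuousOn (continuous_expWeight hl t₀).continuousOn).const_mul C)
    _ = C * |∫ s in t₀..t, l s * expWeight l t₀ s| := by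
        rw [intervalIntegral.integral_const_mul, abs_mul, abs_of_nonneg hC]
    _ ≤ C * (expWeight l t₀ t / 2) := by
        gcongr
        exact abs_integral_mul_expWeight_le hl hl₀ t₀ t
    _ = C / 2 * expWeight l t₀ t := by ring

end Weight

/-- Carathéodory conditions for `x' = f t x`: locally integrable along continuous curves, with
Lipschitz constant and size at `0` controlled by a locally integrable rate `l`. -/
structure IsCaratheodory {E : Type*} [NormedAddCommGroup E] (f : ℝ → E → E) (l : ℝ → ℝ) :
    Prop where
  intervalIntegrable_rate : ∀ a b, IntervalIntegrable l volume a b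
  intervalIntegrable_comp : ∀ {x : ℝ → E}, Continuous x →
    ∀ a b, IntervalIntegrable (fun t => f t (x t)) volume a b
  norm_sub_le : ∀ t x y, ‖f t x - f t y‖ ≤ l t * ‖x - y‖
  norm_zero_le : ∀ t, ‖f t 0‖ ≤ l t

namespace IsCaratheodory

variable {E : Type*} [NormedAddCommGroup E] {f : ℝ → E → E} {l : ℝ → ℝ}

theorem rate_nonneg (hf : IsCaratheodory f l) (t : ℝ) : 0 ≤ l t :=
  (norm_nonneg _).trans (hf.norm_zero_le t)

theorem norm_le (hf : IsCaratheodory f l) (t : ℝ) (x : E) : ‖f t x‖ ≤ l t * (1 + ‖x‖) :=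
  calc ‖f t x‖ ≤ ‖f t 0‖ + ‖f t x - f t 0‖ := norm_le_norm_add_norm_sub' _ _
    _ ≤ l t + l t * ‖x - 0‖ := add_le_add (hf.norm_zero_le t) (hf.norm_sub_le t x 0)
    _ = l t * (1 + ‖x‖) := by rw [sub_zero]; ring

variable [NormedSpace ℝ E]

theorem eqOn_uIcc (hf : IsCaratheodory f l) {x y : ℝ → E} (hx : Continuous x) (hy : Continuous y)
    {t₀ t₁ : ℝ} {p : E} (hxI : ∀ t ∈ uIcc t₀ t₁, x t = p + ∫ s in t₀..t, f s (x s))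
    (hyI : ∀ t ∈ uIcc t₀ t₁, y t = p + ∫ s in t₀..t, f s (y s)) : EqOn x y (uIcc t₀ t₁) := by
  let W := expWeight l t₀
  have hW : ∀ t, 0 < W t := expWeight_pos l t₀
  obtain ⟨τ, hτ, hmax⟩ := isCompact_uIcc.exists_isMaxOn nonempty_uIcc
    ((hx.sub hy).norm.div (continuous_expWeight hf.intervalIntegrable_rate t₀)
      fun t => (hW t).ne').continuousOn
  let M := ‖x τ - y τ‖ / W τ
  have hM : ∀ t ∈ uIcc t₀ t₁, ‖x t - y t‖ ≤ M * W t := fun t ht =>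
    (div_le_iff₀ (hW t)).1 (hmax ht)
  have hM₀ : 0 ≤ M := div_nonneg (norm_nonneg _) (hW τ).le
  have hhalf : ‖x τ - y τ‖ ≤ M / 2 * W τ := by
    rw [hxI τ hτ, hyI τ hτ, add_sub_add_left_eq_sub, ← intervalIntegral.integral_sub
      (hf.intervalIntegrable_comp hx _ _) (hf.intervalIntegrable_comp hy _ _)]
    refine norm_integral_le_of_norm_le_expWeight hf.intervalIntegrable_rate hf.rate_nonneg hM₀
      fun s hs => (hf.norm_sub_le s _ _).trans ?_
    rw [mul_left_comm]
    exact mul_le_mul_of_nonneg_left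
      (hM s (uIcc_subset_uIcc left_mem_uIcc hτ (uIoc_subset_uIcc hs))) (hf.rate_nonneg s)
  have hM_half : M ≤ M / 2 := (div_le_iff₀ (hW τ)).2 hhalf
  intro t ht
  rw [← sub_eq_zero, ← norm_le_zero_iff]
  exact (hM t ht).trans (mul_nonpos_of_nonpos_of_nonneg (by linarith) (hW t).le)

theorem continuous_expWeight_smul (hf : IsCaratheodory f l) (t₀ : ℝ) (w : ℝ →ᵇ E) :
    Continuous fun t => expWeight l t₀ t • w t :=
  (continuous_expWeight hf.intervalIntegrable_rate t₀).smul w.continuous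

theorem norm_comp_expWeight_smul_le (hf : IsCaratheodory f l) (t₀ : ℝ) (w : ℝ →ᵇ E) (t : ℝ) :
    ‖f t (expWeight l t₀ t • w t)‖ ≤ (1 + ‖w‖) * (l t * expWeight l t₀ t) := by
  have hW := one_le_expWeight l t₀ t
  have hle : 1 + ‖expWeight l t₀ t • w t‖ ≤ (1 + ‖w‖) * expWeight l t₀ t := by
    rw [norm_smul, Real.norm_of_nonneg (by linarith)]
    nlinarith [w.norm_coe_le_norm t]
  calc ‖f t (expWeight l t₀ t • w t)‖ ≤ l t * (1 + ‖expWeight l t₀ t • w t‖) := hf.norm_le _ _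
    _ ≤ l t * ((1 + ‖w‖) * expWeight l t₀ t) := by gcongr; exact hf.rate_nonneg t
    _ = (1 + ‖w‖) * (l t * expWeight l t₀ t) := by ring

/-- The Picard operator in the unknown `w = x / expWeight l t₀`, which makes it act on bounded
functions on the whole line. -/
noncomputable def picard (hf : IsCaratheodory f l) (t₀ : ℝ) (p : E) (w : ℝ →ᵇ E) : ℝ →ᵇ E :=
  BoundedContinuousFunction.ofNormedAddCommGroup
    (fun t => (expWeight l t₀ t)⁻¹ • (p + ∫ s in t₀..t, f s (expWeight l t₀ s • w s)))
    (((continuous_expWeight hf.intervalIntegrable_rate t₀).inv₀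
      fun t => (expWeight_pos l t₀ t).ne').smul (continuous_const.add
        (intervalIntegral.continuous_primitive
          (hf.intervalIntegrable_comp (hf.continuous_expWeight_smul t₀ w)) t₀)))
    (‖p‖ + (1 + ‖w‖) / 2) fun t => by
      have hW := one_le_expWeight l t₀ t
      rw [norm_smul, norm_inv, Real.norm_of_nonneg (by linarith), inv_mul_le_iff₀ (by linarith)]
      have hint := norm_integral_le_of_norm_le_expWeight (t := t) hf.intervalIntegrable_rate
        hf.rate_nonneg (by positivity) fun s _ => hf.norm_comp_expWeight_smul_le t₀ w s
      calc ‖p + ∫ s in t₀..t, f s (expWeight l t₀ s • w s)‖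
          ≤ ‖p‖ + (1 + ‖w‖) / 2 * expWeight l t₀ t := (norm_add_le _ _).trans (by gcongr)
        _ ≤ expWeight l t₀ t * (‖p‖ + (1 + ‖w‖) / 2) := by nlinarith [norm_nonneg p]

theorem picard_apply (hf : IsCaratheodory f l) (t₀ : ℝ) (p : E) (w : ℝ →ᵇ E) (t : ℝ) :
    hf.picard t₀ p w t =
      (expWeight l t₀ t)⁻¹ • (p + ∫ s in t₀..t, f s (expWeight l t₀ s • w s)) :=
  rfl

theorem contractingWith_picard (hf : IsCaratheodory f l) (t₀ : ℝ) (p : E) :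
    ContractingWith 2⁻¹ (hf.picard t₀ p) := by
  refine ⟨inv_lt_one_of_one_lt₀ one_lt_two, LipschitzWith.of_dist_le_mul fun w w' => ?_⟩
  rw [BoundedContinuousFunction.dist_le (by positivity)]
  intro t
  have hW := expWeight_pos l t₀ t
  rw [dist_eq_norm, picard_apply, picard_apply, ← smul_sub, add_sub_add_left_eq_sub,
    ← intervalIntegral.integral_sub
      (hf.intervalIntegrable_comp (hf.continuous_expWeight_smul t₀ w) _ _)
      (hf.intervalIntegrable_comp (hf.continuous_expWeight_smul t₀ w') _ _),
    norm_smul, norm_inv, Real.norm_of_nonneg hW.le, inv_mul_le_iff₀ hW]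
  refine (norm_integral_le_of_norm_le_expWeight hf.intervalIntegrable_rate hf.rate_nonneg
    (C := dist w w') dist_nonneg fun s _ => (hf.norm_sub_le s _ _).trans ?_).trans_eq ?_
  · rw [← smul_sub, norm_smul, Real.norm_of_nonneg (expWeight_pos l t₀ s).le, ← mul_assoc,
      mul_comm, ← dist_eq_norm]
    exact mul_le_mul_of_nonneg_right (BoundedContinuousFunction.dist_coe_le_dist s)
      (mul_nonneg (hf.rate_nonneg s) (expWeight_pos l t₀ s).le)
  · rw [NNReal.coe_inv, NNReal.coe_ofNat]
    ring

theorem dist_picard_le (hf : IsCaratheodory f l) (t₀ : ℝ) (p p' : E) (w : ℝ →ᵇ E) :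
    dist (hf.picard t₀ p w) (hf.picard t₀ p' w) ≤ dist p p' := by
  rw [BoundedContinuousFunction.dist_le dist_nonneg]
  intro t
  have hW := one_le_expWeight l t₀ t
  rw [dist_eq_norm, picard_apply, picard_apply, ← smul_sub, add_sub_add_right_eq_sub, norm_smul,
    norm_inv, Real.norm_of_nonneg (by linarith), inv_mul_le_iff₀ (by linarith), dist_eq_norm]
  exact le_mul_of_one_le_left (norm_nonneg _) hW

theorem exists_flow [CompleteSpace E] (hf : IsCaratheodory f l) (t₀ : ℝ) :
    ∃ φ : E → ℝ → E, Continuous (Function.uncurry φ) ∧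
      ∀ p t, φ p t = p + ∫ s in t₀..t, f s (φ p s) := by
  let w : E → ℝ →ᵇ E := fun p =>
    ContractingWith.fixedPoint (hf.picard t₀ p) (hf.contractingWith_picard t₀ p)
  have hw : ∀ p, hf.picard t₀ p (w p) = w p := fun p =>
    (hf.contractingWith_picard t₀ p).fixedPoint_isFixedPt
  have hw_lip : LipschitzWith 2 w := LipschitzWith.of_dist_le_mul fun p p' => by
    have hle := (hf.contractingWith_picard t₀ p).fixedPoint_lipschitz_in_map
      (hf.contractingWith_picard t₀ p') fun w => hf.dist_picard_le t₀ p p' w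
    rw [NNReal.coe_inv, NNReal.coe_ofNat] at hle
    exact hle.trans_eq (by rw [NNReal.coe_ofNat]; ring)
  refine ⟨fun p t => expWeight l t₀ t • w p t, ?_, fun p t => ?_⟩
  · have heval : Continuous fun z : E × ℝ => w z.1 z.2 :=
      continuous_eval.comp ((hw_lip.continuous.comp continuous_fst).prodMk continuous_snd)
    exact ((continuous_expWeight hf.intervalIntegrable_rate t₀).comp continuous_snd).smul heval
  · change expWeight l t₀ t • w p t = _
    nth_rw 1 [← hw p]
    rw [picard_apply, smul_inv_smul₀ (expWeight_pos l t₀ t).ne']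

end IsCaratheodory

end Caratheodory

section Trajectory

/-- Nonlinearities for which `u'' + q(t) G(u) = 0` is globally well posed: `G` is Lipschitz,
nonnegative, and vanishes on `(-∞, 0]`, so that trajectories move along straight lines there. -/
structure IsAdmissible (G : ℝ → ℝ) : Prop where
  exists_lipschitzWith : ∃ Λ, LipschitzWith Λ G
  nonneg : ∀ s, 0 ≤ G s
  eq_zero_of_nonpos : ∀ s ≤ 0, G s = 0

theorem IsAdmissible.continuous {G : ℝ → ℝ} (hG : IsAdmissible G) : Continuous G :=
  hG.exists_lipschitzWith.elim fun _ h => h.continuous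

/-- `u` solves `u'' + q(t) G(u) = 0` on `ℝ` in the Carathéodory sense, with velocity `v = u'`. -/
structure IsTrajectory (q G u v : ℝ → ℝ) : Prop where
  hasDerivAt : ∀ t, HasDerivAt u (v t) t
  continuous_vel : Continuous v
  vel_sub : ∀ s t, v t - v s = -∫ z in s..t, q z * G (u z)

/-- The vector field on the phase plane whose integral curves `(u, v)` are the trajectories. -/
def planarField (q G : ℝ → ℝ) (t : ℝ) (x : ℝ × ℝ) : ℝ × ℝ :=
  (x.2, -(q t * G x.1))

variable {q G u v : ℝ → ℝ}

theorem intervalIntegrable_mul_comp (hq : ∀ a b, IntervalIntegrable q volume a b)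
    (hG : Continuous G) (hu : Continuous u) (a b : ℝ) :
    IntervalIntegrable (fun t => q t * G (u t)) volume a b :=
  (hq a b).mul_continuousOn (hG.comp hu).continuousOn

theorem integral_planarField (hq : ∀ a b, IntervalIntegrable q volume a b) (hG : Continuous G)
    {x : ℝ → ℝ × ℝ} (hx : Continuous x) (a b : ℝ) :
    ∫ t in a..b, planarField q G t (x t) =
      (∫ t in a..b, (x t).2, -∫ t in a..b, q t * G (x t).1) := by
  have hfst := hx.snd.intervalIntegrable (μ := volume) a b
  have hsnd : IntervalIntegrable (fun t => -(q t * G (x t).1)) volume a b :=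
    (intervalIntegrable_mul_comp hq hG hx.fst a b).neg
  simp only [planarField, intervalIntegral]
  rw [integral_pair hfst.1 hsnd.1, integral_pair hfst.2 hsnd.2,
    Prod.mk_sub_mk, integral_neg, integral_neg, neg_sub_neg, neg_sub]

theorem isCaratheodory_planarField (hq : ∀ a b, IntervalIntegrable q volume a b) {Λ : NNReal}
    (hG : LipschitzWith Λ G) (hG₀ : G 0 = 0) :
    IsCaratheodory (planarField q G) fun t => 1 + Λ * |q t| where
  intervalIntegrable_rate a b := intervalIntegrable_const.add ((hq a b).abs.const_mul _)
  intervalIntegrable_comp hx a b :=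
    have hfst := hx.snd.intervalIntegrable (μ := volume) a b
    have hsnd := intervalIntegrable_mul_comp hq hG.continuous hx.fst a b
    ⟨hfst.1.prodMk hsnd.1.neg, hfst.2.prodMk hsnd.2.neg⟩
  norm_sub_le t x y := by
    have hrate : 0 ≤ Λ * |q t| := by positivity
    refine max_le ?_ ?_
    · exact (norm_snd_le (x - y)).trans (le_mul_of_one_le_left (norm_nonneg _) (by linarith))
    · calc ‖-(q t * G x.1) - -(q t * G y.1)‖ = |q t| * ‖G x.1 - G y.1‖ := by
            rw [← neg_sub', ← mul_sub, norm_neg, norm_mul, Real.norm_eq_abs (q t)]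
        _ ≤ |q t| * (Λ * ‖x - y‖) := by
            gcongr
            exact (hG.norm_sub_le _ _).trans (by gcongr; exact norm_fst_le (x - y))
        _ ≤ (1 + Λ * |q t|) * ‖x - y‖ := by nlinarith [norm_nonneg (x - y)]
  norm_zero_le t := by
    have hrate : 0 ≤ 1 + Λ * |q t| := by positivity
    simpa [planarField, hG₀] using hrate

theorem exists_flow_isTrajectory (hq : ∀ a b, IntervalIntegrable q volume a b)
    (hG : IsAdmissible G) (t₀ : ℝ) :
    ∃ φ : ℝ × ℝ → ℝ → ℝ × ℝ, Continuous (Function.uncurry φ) ∧ (∀ p, φ p t₀ = p) ∧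
      ∀ p, IsTrajectory q G (fun t => (φ p t).1) fun t => (φ p t).2 := by
  obtain ⟨Λ, hΛ⟩ := hG.exists_lipschitzWith
  have hG₀ := hG.eq_zero_of_nonpos 0 le_rfl
  obtain ⟨φ, hφ, hφI⟩ := (isCaratheodory_planarField hq hΛ hG₀).exists_flow t₀
  have hφp : ∀ p, Continuous (φ p) := fun p => hφ.comp (Continuous.prodMk_right p)
  have hpos : ∀ p t, (φ p t).1 = p.1 + ∫ s in t₀..t, (φ p s).2 := fun p t => by
    rw [hφI p t, integral_planarField hq hG.continuous (hφp p)]; rfl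
  have hvel : ∀ p t, (φ p t).2 = p.2 - ∫ s in t₀..t, q s * G (φ p s).1 := fun p t => by
    rw [hφI p t, integral_planarField hq hG.continuous (hφp p), sub_eq_add_neg]; rfl
  refine ⟨φ, hφ, fun p => by rw [hφI p t₀, intervalIntegral.integral_same, add_zero],
    fun p => ⟨fun t => ?_, (hφp p).snd, fun s t => ?_⟩⟩
  · rw [funext (hpos p)]
    exact ((hφp p).snd.integral_hasStrictDerivAt t₀ t).hasDerivAt.const_add p.1
  · have hint := intervalIntegrable_mul_comp hq hG.continuous (hφp p).fst
    rw [hvel p s, hvel p t,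
      ← intervalIntegral.integral_add_adjacent_intervals (hint t₀ s) (hint s t)]
    ring

namespace IsTrajectory

theorem continuous_pos (h : IsTrajectory q G u v) : Continuous u :=
  continuous_iff_continuousAt.2 fun t => (h.hasDerivAt t).continuousAt

theorem comp_add_right (h : IsTrajectory q G u v) {T : ℝ} (hqT : Function.Periodic q T) :
    IsTrajectory q G (fun t => u (t + T)) fun t => v (t + T) where
  hasDerivAt t := (h.hasDerivAt (t + T)).comp_add_const t T
  continuous_vel := h.continuous_vel.comp (continuous_add_const T)
  vel_sub s t := by
    rw [h.vel_sub, ← intervalIntegral.integral_comp_add_right]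
    simp only [hqT _]

theorem eq_add_integral_planarField (h : IsTrajectory q G u v)
    (hq : ∀ a b, IntervalIntegrable q volume a b) (hG : Continuous G) (t₀ t : ℝ) :
    (u t, v t) = (u t₀, v t₀) + ∫ s in t₀..t, planarField q G s (u s, v s) := by
  have hpos : ∫ s in t₀..t, v s = u t - u t₀ := intervalIntegral.integral_eq_sub_of_hasDerivAt
    (fun s _ => h.hasDerivAt s) (h.continuous_vel.intervalIntegrable _ _)
  rw [integral_planarField hq hG (h.continuous_pos.prodMk h.continuous_vel), hpos,
    ← h.vel_sub t₀ t, Prod.mk_add_mk, add_sub_cancel, add_sub_cancel]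

theorem unique {u' v' : ℝ → ℝ} (h : IsTrajectory q G u v) (h' : IsTrajectory q G u' v')
    (hq : ∀ a b, IntervalIntegrable q volume a b) (hG : IsAdmissible G) {t₀ : ℝ}
    (hu : u t₀ = u' t₀) (hv : v t₀ = v' t₀) : u = u' := by
  obtain ⟨Λ, hΛ⟩ := hG.exists_lipschitzWith
  funext t
  have heq := (isCaratheodory_planarField hq hΛ (hG.eq_zero_of_nonpos 0 le_rfl)).eqOn_uIcc
    (h.continuous_pos.prodMk h.continuous_vel) (h'.continuous_pos.prodMk h'.continuous_vel)
    (t₁ := t) (fun s _ => h.eq_add_integral_planarField hq hG.continuous t₀ s)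
    (fun s _ => by
      rw [hu, hv]
      exact h'.eq_add_integral_planarField hq hG.continuous t₀ s)
  exact congrArg Prod.fst (heq right_mem_uIcc)

theorem periodic (h : IsTrajectory q G u v) (hq : ∀ a b, IntervalIntegrable q volume a b)
    (hG : IsAdmissible G) {T t₀ : ℝ} (hqT : Function.Periodic q T) (hu : u (t₀ + T) = u t₀)
    (hv : v (t₀ + T) = v t₀) : Function.Periodic u T :=
  congrFun ((h.comp_add_right hqT).unique h hq hG hu hv)

theorem eq_line (h : IsTrajectory q G u v) (hq : ∀ a b, IntervalIntegrable q volume a b)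
    (hG : IsAdmissible G) {t₀ t : ℝ} (hline : ∀ s ∈ uIcc t₀ t, u t₀ + v t₀ * (s - t₀) ≤ 0) :
    u t = u t₀ + v t₀ * (t - t₀) := by
  obtain ⟨Λ, hΛ⟩ := hG.exists_lipschitzWith
  have hcont : Continuous fun s => (u t₀ + v t₀ * (s - t₀), v t₀) := by fun_prop
  have heq := (isCaratheodory_planarField hq hΛ (hG.eq_zero_of_nonpos 0 le_rfl)).eqOn_uIcc
    (h.continuous_pos.prodMk h.continuous_vel) hcont
    (fun s _ => h.eq_add_integral_planarField hq hG.continuous t₀ s) fun s hs => by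
      have hG₀ : ∫ z in t₀..s, q z * G (u t₀ + v t₀ * (z - t₀)) = 0 :=
        intervalIntegral.integral_zero_ae <| Eventually.of_forall fun z hz => by
          rw [hG.eq_zero_of_nonpos _
            (hline z (uIcc_subset_uIcc left_mem_uIcc hs (uIoc_subset_uIcc hz))), mul_zero]
      rw [integral_planarField hq hG.continuous hcont, hG₀, intervalIntegral.integral_const,
        neg_zero, smul_eq_mul, Prod.mk_add_mk, add_zero, mul_comm]
  exact congrArg Prod.fst (heq right_mem_uIcc)

theorem pos (h : IsTrajectory q G u v) (hq : ∀ a b, IntervalIntegrable q volume a b)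
    (hG : IsAdmissible G) (hnonneg : ∀ t, 0 ≤ u t) {t₀ : ℝ} (hpos : 0 < u t₀) (t : ℝ) :
    0 < u t := by
  refine (hnonneg t).lt_of_ne' fun hut => hpos.ne' ?_
  have hmin : IsLocalMin u t := Eventually.of_forall fun s => hut.trans_le (hnonneg s)
  have hvt : v t = 0 := hmin.hasDerivAt_eq_zero (h.hasDerivAt t)
  have hline : ∀ s, u t + v t * (s - t) = 0 := fun s => by rw [hut, hvt, zero_mul, add_zero]
  exact (h.eq_line hq hG fun s _ => (hline s).le).trans (hline t₀)

/-- The velocity with which a trajectory enters the negative half-line is never changed again. -/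
theorem neg_of_neg (h : IsTrajectory q G u v) (hq : ∀ a b, IntervalIntegrable q volume a b)
    (hG : IsAdmissible G) {t₀ t₁ t₂ : ℝ} (h₀ : 0 ≤ u t₀) (h₁ : u t₁ < 0) (h₀₁ : t₀ ≤ t₁)
    (h₁₂ : t₁ ≤ t₂) : u t₂ < 0 := by
  obtain ⟨z, ⟨hz, huz⟩, hzmax⟩ := (isCompact_Icc.inter_right
    (isClosed_le continuous_const h.continuous_pos)).exists_isGreatest
      (⟨t₀, left_mem_Icc.2 h₀₁, h₀⟩ : (Icc t₀ t₁ ∩ {t | 0 ≤ u t}).Nonempty)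
  have hzt : z < t₁ := hz.2.lt_of_ne fun hzt => h₁.not_ge (hzt ▸ huz)
  obtain ⟨c, hc, hvc⟩ := exists_hasDerivAt_eq_slope u v hzt h.continuous_pos.continuousOn
    fun t _ => h.hasDerivAt t
  have hvc_neg : v c < 0 := by
    rw [hvc]
    exact div_neg_of_neg_of_pos (by linarith [show 0 ≤ u z from huz]) (sub_pos.2 hzt)
  have huc : u c < 0 := not_le.1 fun huc =>
    hc.1.not_ge (hzmax ⟨⟨hz.1.trans hc.1.le, hc.2.le⟩, huc⟩)
  have hline : ∀ s, c ≤ s → u c + v c * (s - c) < 0 := fun s hs =>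
    add_neg_of_neg_of_nonpos huc (mul_nonpos_of_nonpos_of_nonneg hvc_neg.le (sub_nonneg.2 hs))
  have hct : c ≤ t₂ := hc.2.le.trans h₁₂
  rw [h.eq_line hq hG fun s hs => (hline s (uIcc_of_le hct ▸ hs).1).le]
  exact hline t₂ hct

end IsTrajectory

end Trajectory

section TangentLine

variable {u v : ℝ → ℝ} {a b : ℝ}

theorem tangent_le_of_monotoneOn (hu : ∀ t, HasDerivAt u (v t) t) (hv : MonotoneOn v (Icc a b))
    {x y : ℝ} (hx : x ∈ Icc a b) (hy : y ∈ Icc a b) : u x + v x * (y - x) ≤ u y := by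
  have hcont : Continuous u := continuous_iff_continuousAt.2 fun t => (hu t).continuousAt
  rcases lt_trichotomy x y with hxy | rfl | hyx
  · obtain ⟨c, hc, hvc⟩ := exists_hasDerivAt_eq_slope u v hxy hcont.continuousOn fun t _ => hu t
    have hle : v x ≤ v c := hv hx ⟨hx.1.trans hc.1.le, hc.2.le.trans hy.2⟩ hc.1.le
    rw [hvc, le_div_iff₀ (sub_pos.2 hxy)] at hle
    linarith
  · simp
  · obtain ⟨c, hc, hvc⟩ := exists_hasDerivAt_eq_slope u v hyx hcont.continuousOn fun t _ => hu t
    have hle : v c ≤ v x := hv ⟨hy.1.trans hc.1.le, hc.2.le.trans hx.2⟩ hx hc.2.le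
    rw [hvc, div_le_iff₀ (sub_pos.2 hyx)] at hle
    linarith

theorem le_tangent_of_antitoneOn (hu : ∀ t, HasDerivAt u (v t) t) (hv : AntitoneOn v (Icc a b))
    {x y : ℝ} (hx : x ∈ Icc a b) (hy : y ∈ Icc a b) : u y ≤ u x + v x * (y - x) := by
  have := tangent_le_of_monotoneOn (fun t => (hu t).neg) hv.neg hx hy
  simp only [Pi.neg_apply] at this
  linarith

theorem lt_of_monotoneOn_of_lt (hu : ∀ t, HasDerivAt u (v t) t) (hv : MonotoneOn v (Icc a b))
    {R : ℝ} (ha : u a < R) (hb : u b < R) {x : ℝ} (hx : x ∈ Icc a b) : u x < R := by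
  have hab : a ≤ b := hx.1.trans hx.2
  rcases le_total (v x) 0 with hvx | hvx
  · have := tangent_le_of_monotoneOn hu hv hx (left_mem_Icc.2 hab)
    nlinarith [hx.1]
  · have := tangent_le_of_monotoneOn hu hv hx (right_mem_Icc.2 hab)
    nlinarith [hx.2]

theorem mul_le_mul_of_antitoneOn (hu : ∀ t, HasDerivAt u (v t) t) (hv : AntitoneOn v (Icc a b))
    (hnonneg : ∀ t ∈ Icc a b, 0 ≤ u t) {d s z : ℝ} (hd : 0 ≤ d) (hs : s ∈ Icc (a + d) (b - d))
    (hz : z ∈ Icc a b) : d * u z ≤ (b - a) * u s := by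
  have hsab : s ∈ Icc a b := ⟨by linarith [hs.1], by linarith [hs.2]⟩
  have hab : a ≤ b := hz.1.trans hz.2
  have hus := hnonneg s hsab
  have huz := hnonneg z hz
  have htan := le_tangent_of_antitoneOn hu hv hsab hz
  rcases le_total s z with hsz | hzs
  · have hleft : v s * (s - a) ≤ u s := by
      linarith [le_tangent_of_antitoneOn hu hv hsab (left_mem_Icc.2 hab),
        hnonneg a (left_mem_Icc.2 hab)]
    calc d * u z ≤ (s - a) * u z := by gcongr; linarith [hs.1]
      _ ≤ (s - a) * (u s + v s * (z - s)) := by gcongr; exact sub_nonneg.2 hsab.1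
      _ = (s - a) * u s + v s * (s - a) * (z - s) := by ring
      _ ≤ (s - a) * u s + u s * (z - s) := by gcongr
      _ = (z - a) * u s := by ring
      _ ≤ (b - a) * u s := by gcongr; exact hz.2
  · have hright : -v s * (b - s) ≤ u s := by
      linarith [le_tangent_of_antitoneOn hu hv hsab (right_mem_Icc.2 hab),
        hnonneg b (right_mem_Icc.2 hab)]
    calc d * u z ≤ (b - s) * u z := by gcongr; linarith [hs.2]
      _ ≤ (b - s) * (u s + v s * (z - s)) := by gcongr; exact sub_nonneg.2 hsab.2
      _ = (b - s) * u s + -v s * (b - s) * (s - z) := by ring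
      _ ≤ (b - s) * u s + u s * (s - z) := by gcongr
      _ = (b - z) * u s := by ring
      _ ≤ (b - a) * u s := by gcongr; exact hz.1

theorem nonpos_of_hasDerivAt_of_forall_nonneg (hab : a < b) {w : ℝ} (hw : HasDerivAt u w b)
    (hnonneg : ∀ t ∈ Icc a b, 0 ≤ u t) (hb : u b = 0) : w ≤ 0 := by
  refine le_of_tendsto (hasDerivWithinAt_iff_tendsto_slope' self_notMem_Iio |>.1
    hw.hasDerivWithinAt) ?_
  filter_upwards [Ioo_mem_nhdsLT hab] with t ht
  rw [slope_def_field, hb, sub_zero]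
  exact div_nonpos_of_nonneg_of_nonpos (hnonneg t ⟨ht.1.le, ht.2.le⟩) (by linarith [ht.2])

end TangentLine

section IntervalEstimates

variable {q G u v : ℝ → ℝ} {a b : ℝ}

theorem ae_restrict_Icc_of_subset {p : ℝ → Prop} {c d : ℝ}
    (hp : ∀ᵐ t ∂volume.restrict (Icc a b), p t) (hac : a ≤ c) (hdb : d ≤ b) :
    ∀ᵐ t ∂volume.restrict (Icc c d), p t :=
  ae_restrict_of_ae_restrict_of_subset (Icc_subset_Icc hac hdb) hp

theorem mul_integral_le_integral_mul {p w : ℝ → ℝ} (hp : IntervalIntegrable p volume a b)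
    (hw : Continuous w) {c : ℝ} (hab : a ≤ b) (hp₀ : ∀ᵐ t ∂volume.restrict (Icc a b), 0 ≤ p t)
    (hc : ∀ t ∈ Icc a b, c ≤ w t) : c * ∫ t in a..b, p t ≤ ∫ t in a..b, p t * w t := by
  rw [← intervalIntegral.integral_const_mul]
  refine intervalIntegral.integral_mono_ae_restrict hab (hp.const_mul c)
    (hp.mul_continuousOn hw.continuousOn) ?_
  filter_upwards [hp₀, ae_restrict_mem measurableSet_Icc] with t hpt ht
  rw [mul_comm]
  exact mul_le_mul_of_nonneg_left (hc t ht) hpt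

namespace IsTrajectory

theorem antitoneOn_vel (h : IsTrajectory q G u v) (hG : ∀ s, 0 ≤ G s)
    (hq : ∀ᵐ t ∂volume.restrict (Icc a b), 0 ≤ q t) : AntitoneOn v (Icc a b) :=
  fun s hs t ht hst => sub_nonpos.1 <| by
    rw [h.vel_sub, neg_nonpos]
    refine intervalIntegral.integral_nonneg_of_ae_restrict hst ?_
    filter_upwards [ae_restrict_Icc_of_subset hq hs.1 ht.2] with z hz using mul_nonneg hz (hG _)

theorem monotoneOn_vel (h : IsTrajectory q G u v) (hG : ∀ s, 0 ≤ G s)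
    (hq : ∀ᵐ t ∂volume.restrict (Icc a b), q t ≤ 0) : MonotoneOn v (Icc a b) :=
  fun s hs t ht hst => sub_nonneg.1 <| by
    rw [h.vel_sub, ← intervalIntegral.integral_neg]
    refine intervalIntegral.integral_nonneg_of_ae_restrict hst ?_
    filter_upwards [ae_restrict_Icc_of_subset hq hs.1 ht.2] with z hz
      using neg_nonneg.2 (mul_nonpos_of_nonpos_of_nonneg hz (hG _))

theorem mul_integral_le_vel_sub (h : IsTrajectory q G u v)
    (hqi : ∀ a b, IntervalIntegrable q volume a b) (hG : Continuous G) {c : ℝ} (hab : a ≤ b)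
    (hq : ∀ᵐ t ∂volume.restrict (Icc a b), 0 ≤ q t) (hc : ∀ t ∈ Icc a b, c ≤ G (u t)) :
    c * ∫ t in a..b, q t ≤ v a - v b := by
  rw [← neg_sub, h.vel_sub, neg_neg]
  exact mul_integral_le_integral_mul (hqi a b) (hG.comp h.continuous_pos) hab hq hc

theorem vel_sub_le_mul_integral (h : IsTrajectory q G u v)
    (hqi : ∀ a b, IntervalIntegrable q volume a b) (hG : Continuous G) {c : ℝ} (hab : a ≤ b)
    (hq : ∀ᵐ t ∂volume.restrict (Icc a b), 0 ≤ q t) (hc : ∀ t ∈ Icc a b, G (u t) ≤ c) :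
    v a - v b ≤ c * ∫ t in a..b, q t := by
  have hneg : -c * ∫ t in a..b, q t ≤ ∫ t in a..b, q t * -G (u t) :=
    mul_integral_le_integral_mul (hqi a b) (hG.comp h.continuous_pos).neg hab hq
      fun t ht => neg_le_neg (hc t ht)
  simp only [mul_neg, neg_mul, intervalIntegral.integral_neg, neg_le_neg_iff] at hneg
  rwa [← neg_sub, h.vel_sub, neg_neg]

theorem mul_integral_neg_le_vel_sub (h : IsTrajectory q G u v)
    (hqi : ∀ a b, IntervalIntegrable q volume a b) (hG : Continuous G) {c : ℝ} (hab : a ≤ b)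
    (hq : ∀ᵐ t ∂volume.restrict (Icc a b), q t ≤ 0) (hc : ∀ t ∈ Icc a b, c ≤ G (u t)) :
    c * ∫ t in a..b, -q t ≤ v b - v a := by
  have hneg : c * ∫ t in a..b, -q t ≤ ∫ t in a..b, -q t * G (u t) :=
    mul_integral_le_integral_mul (hqi a b).neg (hG.comp h.continuous_pos) hab
      (hq.mono fun _ => neg_nonneg.2) hc
  simpa only [neg_mul, intervalIntegral.integral_neg, h.vel_sub] using hneg

theorem lt_of_superlinear (h : IsTrajectory q G u v)
    (hqi : ∀ a b, IntervalIntegrable q volume a b) (hG : IsAdmissible G) {d K R s₀ : ℝ}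
    (hd : 0 < d) (hab : a + 2 * d < b) (hq : ∀ᵐ t ∂volume.restrict (Icc a b), 0 ≤ q t)
    (hK₀ : 0 ≤ K) (hK : 2 * (b - a) < K * (∫ t in (a + d)..(b - d), q t) * d ^ 2)
    (hGK : ∀ s, s₀ ≤ s → K * s ≤ G s) (hR₀ : 0 < R) (hR : s₀ * (b - a) ≤ d * R)
    (hnonneg : ∀ t ∈ Icc a b, 0 ≤ u t) : ∀ t ∈ Icc a b, u t < R := by
  have hle : a ≤ b := by linarith
  have hlen : 0 < b - a := by linarith
  have ha := left_mem_Icc.2 hle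
  have hb := right_mem_Icc.2 hle
  have had : a + d ∈ Icc a b := ⟨by linarith, by linarith⟩
  have hbd : b - d ∈ Icc a b := ⟨by linarith, by linarith⟩
  have hv := h.antitoneOn_vel hG.nonneg hq
  obtain ⟨z, hz, hzmax⟩ := isCompact_Icc.exists_isMaxOn ⟨a, ha⟩ h.continuous_pos.continuousOn
  by_contra! hcon
  obtain ⟨t, ht, htR⟩ := hcon
  have hzR : R ≤ u z := htR.trans (hzmax ht)
  have hlow : ∀ s ∈ Icc (a + d) (b - d), K * (d * u z / (b - a)) ≤ G (u s) := fun s hs => by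
    have hus : d * u z / (b - a) ≤ u s := (div_le_iff₀' hlen).2
      (mul_le_mul_of_antitoneOn h.hasDerivAt hv hnonneg hd.le hs hz)
    have hs₀ : s₀ ≤ d * u z / (b - a) := (le_div_iff₀ hlen).2 (by nlinarith)
    exact (by gcongr : K * (d * u z / (b - a)) ≤ K * u s).trans (hGK _ (hs₀.trans hus))
  have hdrop := h.mul_integral_le_vel_sub hqi hG.continuous (by linarith : a + d ≤ b - d)
    (ae_restrict_Icc_of_subset hq had.1 hbd.2) hlow
  have hrise : v (a + d) * d ≤ u z := by
    linarith [le_tangent_of_antitoneOn h.hasDerivAt hv had ha, hnonneg a ha,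
      show u (a + d) ≤ u z from hzmax had]
  have hfall : -v (b - d) * d ≤ u z := by
    linarith [le_tangent_of_antitoneOn h.hasDerivAt hv hbd hb, hnonneg b hb,
      show u (b - d) ≤ u z from hzmax hbd]
  have hmax : K * (∫ t in (a + d)..(b - d), q t) * d ^ 2 * u z ≤ 2 * (b - a) * u z := by
    have := mul_le_mul_of_nonneg_right hdrop (mul_pos hd hlen).le
    field_simp at this
    nlinarith
  exact hmax.not_gt (mul_lt_mul_of_pos_right hK (hR₀.trans_le hzR))

theorem le_end_of_max_eq (h : IsTrajectory q G u v)
    (hqi : ∀ a b, IntervalIntegrable q volume a b) (hG : IsAdmissible G) {r e E : ℝ}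
    (hq : ∀ᵐ t ∂volume.restrict (Icc a b), 0 ≤ q t) (hE : ∀ s ≤ r, G s ≤ E) (he₀ : 0 ≤ e)
    (he : E * ∫ t in a..b, q t ≤ e) (hva : 0 ≤ v a) (hur : ∀ t ∈ Icc a b, u t ≤ r)
    (hr : ∃ t ∈ Icc a b, u t = r) : -e ≤ v b ∧ r - e * (b - a) ≤ u b := by
  obtain ⟨z, hz, rfl⟩ := hr
  have hab : a ≤ b := hz.1.trans hz.2
  have hvb : -e ≤ v b := by
    linarith [h.vel_sub_le_mul_integral hqi hG.continuous hab hq fun t ht => hE _ (hur t ht)]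
  refine ⟨hvb, ?_⟩
  have := le_tangent_of_antitoneOn h.hasDerivAt (h.antitoneOn_vel hG.nonneg hq)
    (right_mem_Icc.2 hab) hz
  nlinarith [hz.1, hz.2]

theorem le_end_of_neg_weight (h : IsTrajectory q G u v)
    (hqi : ∀ a b, IntervalIntegrable q volume a b) (hG : IsAdmissible G) {c d e k : ℝ}
    (hd : 0 ≤ d) (hab : a + 2 * d ≤ b) (hq : ∀ᵐ t ∂volume.restrict (Icc a b), q t ≤ 0)
    (hk : ∀ s, c ≤ s → k ≤ G s) (he : 0 ≤ e) (hva : -e ≤ v a) (hua : c + e * (b - a) ≤ u a) :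
    c + d * (k * (∫ t in (a + d)..(b - d), -q t) - e) ≤ u b := by
  have hv := h.monotoneOn_vel hG.nonneg hq
  have ha : a ∈ Icc a b := left_mem_Icc.2 (by linarith)
  have hb : b ∈ Icc a b := right_mem_Icc.2 (by linarith)
  have had : a + d ∈ Icc a b := ⟨by linarith, by linarith⟩
  have hbd : b - d ∈ Icc a b := ⟨by linarith, by linarith⟩
  have hc : ∀ t ∈ Icc a b, c ≤ u t := fun t ht => by
    nlinarith [tangent_le_of_monotoneOn h.hasDerivAt hv ha ht, ht.1, ht.2]
  have hgain := h.mul_integral_neg_le_vel_sub hqi hG.continuous (by linarith : a + d ≤ b - d)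
    (ae_restrict_Icc_of_subset hq had.1 hbd.2) fun t ht =>
      hk _ (hc t ⟨had.1.trans ht.1, ht.2.trans hbd.2⟩)
  nlinarith [tangent_le_of_monotoneOn h.hasDerivAt hv hbd hb, hv ha had had.1, hc _ hbd]

theorem le_start_of_neg_weight (h : IsTrajectory q G u v)
    (hqi : ∀ a b, IntervalIntegrable q volume a b) (hG : IsAdmissible G) {c d k : ℝ}
    (hd : 0 ≤ d) (hab : a + 2 * d ≤ b) (hq : ∀ᵐ t ∂volume.restrict (Icc a b), q t ≤ 0)
    (hk : ∀ s, c ≤ s → k ≤ G s) (hvb : v b ≤ 0) (hub : c ≤ u b) :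
    c + d * (k * ∫ t in (a + d)..(b - d), -q t) ≤ u a := by
  have hv := h.monotoneOn_vel hG.nonneg hq
  have ha : a ∈ Icc a b := left_mem_Icc.2 (by linarith)
  have hb : b ∈ Icc a b := right_mem_Icc.2 (by linarith)
  have had : a + d ∈ Icc a b := ⟨by linarith, by linarith⟩
  have hbd : b - d ∈ Icc a b := ⟨by linarith, by linarith⟩
  have hc : ∀ t ∈ Icc a b, c ≤ u t := fun t ht => by
    nlinarith [tangent_le_of_monotoneOn h.hasDerivAt hv hb ht, ht.2]
  have hgain := h.mul_integral_neg_le_vel_sub hqi hG.continuous (by linarith : a + d ≤ b - d)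
    (ae_restrict_Icc_of_subset hq had.1 hbd.2) fun t ht =>
      hk _ (hc t ⟨had.1.trans ht.1, ht.2.trans hbd.2⟩)
  nlinarith [tangent_le_of_monotoneOn h.hasDerivAt hv had ha, hv hbd hb hbd.2, hc _ had]

theorem vel_end_lt (h : IsTrajectory q G u v) (hqi : ∀ a b, IntervalIntegrable q volume a b)
    (hG : ∀ s, 0 ≤ G s) {R B : ℝ} (hab : a < b) (hB : ∀ s < R, G s ≤ B) (hua : 0 ≤ u a)
    (hu : ∀ t ∈ Icc a b, u t < R) : v b < R / (b - a) + B * ∫ t in a..b, |q t| := by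
  obtain ⟨c, hc, hvc⟩ := exists_hasDerivAt_eq_slope u v hab h.continuous_pos.continuousOn
    fun t _ => h.hasDerivAt t
  have hvc_lt : v c < R / (b - a) := by
    rw [hvc]
    exact div_lt_div_of_pos_right (by linarith [hu b (right_mem_Icc.2 hab.le)]) (sub_pos.2 hab)
  have hB₀ : 0 ≤ B := (hG _).trans (hB _ (hu a (left_mem_Icc.2 hab.le)))
  have hgain : v b - v c ≤ B * ∫ t in a..b, |q t| :=
    calc v b - v c ≤ ‖∫ t in c..b, q t * G (u t)‖ := by
          rw [h.vel_sub]
          exact neg_le_abs _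
      _ ≤ ∫ t in c..b, B * |q t| := by
          refine intervalIntegral.norm_integral_le_of_norm_le hc.2.le
            (Eventually.of_forall fun t ht => ?_) ((hqi c b).abs.const_mul B)
          rw [norm_mul, Real.norm_of_nonneg (hG _), mul_comm, Real.norm_eq_abs]
          exact mul_le_mul_of_nonneg_right (hB _ (hu t ⟨hc.1.le.trans ht.1.le, ht.2⟩))
            (abs_nonneg _)
      _ ≤ B * ∫ t in a..b, |q t| := by
          rw [intervalIntegral.integral_const_mul]
          gcongr
          exact intervalIntegral.integral_mono_interval hc.1.le hc.2.le le_rfl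
            (Eventually.of_forall fun t => abs_nonneg _) (hqi a b).abs
  linarith

end IsTrajectory

end IntervalEstimates

section Shooting

/-- The largest value of `u` on `[a, b]` (for `u` continuous and `a ≤ b`). -/
noncomputable def peak (u : ℝ → ℝ) (a b : ℝ) : ℝ :=
  sSup (u '' Icc a b)

theorem le_peak {u : ℝ → ℝ} (hu : Continuous u) {a b t : ℝ} (ht : t ∈ Icc a b) : u t ≤ peak u a b :=
  le_csSup (isCompact_Icc.image hu).bddAbove (mem_image_of_mem u ht)

theorem exists_eq_peak {u : ℝ → ℝ} (hu : Continuous u) {a b : ℝ} (hab : a ≤ b) :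
    ∃ t ∈ Icc a b, u t = peak u a b :=
  (isCompact_Icc.image hu).sSup_mem ((nonempty_Icc.2 hab).image u)

theorem exists_mem_Icc_succ {α : ℕ → ℝ} {m : ℕ} (hm : 0 < m) {t : ℝ} (ht : t ∈ Icc (α 0) (α m)) :
    ∃ i < m, t ∈ Icc (α i) (α (i + 1)) := by
  induction m, Nat.succ_le_of_lt hm using Nat.le_induction with
  | base => exact ⟨0, zero_lt_one, ht⟩
  | succ n hn ih =>
    rcases le_total t (α n) with htn | htn
    · obtain ⟨i, hi, hti⟩ := ih hn ⟨ht.1, htn⟩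
      exact ⟨i, hi.trans n.lt_succ_self, hti⟩
    · exact ⟨n, n.lt_succ_self, htn, ht.2⟩

/-- Dynamical input of the shooting argument for `u'' + q(t) G(u) = 0`: alternating intervals
`[α i, β i]`, where `q ≥ 0`, and `[β i, α (i+1)]`, where `q ≤ 0`, a small threshold `r`, a large
threshold `R` and a velocity bound `Y`. A trajectory that peaks exactly at height `r` on an interval
of the first kind is thrown above `R` by the next one of the second kind, in both directions of
time, while nonnegative trajectories stay below `R` on intervals of the first kind. -/
structure Barriers (q G : ℝ → ℝ) (m : ℕ) (α β : ℕ → ℝ) (r R Y : ℝ) : Prop where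
  intervalIntegrable : ∀ a b, IntervalIntegrable q volume a b
  isAdmissible : IsAdmissible G
  r_pos : 0 < r
  r_lt : r < R
  Y_pos : 0 < Y
  left_lt : ∀ i < m, α i < β i
  right_lt : ∀ i < m, β i < α (i + 1)
  weight_nonneg : ∀ i < m, ∀ᵐ t ∂volume.restrict (Icc (α i) (β i)), 0 ≤ q t
  weight_nonpos : ∀ i < m, ∀ᵐ t ∂volume.restrict (Icc (β i) (α (i + 1))), q t ≤ 0
  lt_of_nonneg : ∀ {u v}, IsTrajectory q G u v → ∀ i < m, (∀ t ∈ Icc (α i) (β i), 0 ≤ u t) →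
    ∀ t ∈ Icc (α i) (β i), u t < R
  le_of_max_eq : ∀ {u v}, IsTrajectory q G u v → ∀ i < m, 0 ≤ v (α i) →
    (∀ t ∈ Icc (α i) (β i), u t ≤ r) → (∃ t ∈ Icc (α i) (β i), u t = r) → R ≤ u (α (i + 1))
  le_of_vel_nonpos : ∀ {u v}, IsTrajectory q G u v → ∀ i < m, v (α (i + 1)) ≤ 0 →
    r / 2 ≤ u (α (i + 1)) → R ≤ u (β i)
  le_of_vel_le : ∀ {u v}, IsTrajectory q G u v → ∀ i < m, v (α (i + 1)) ≤ -(Y / 2) →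
    0 ≤ u (α (i + 1)) → R ≤ u (β i)
  vel_lt : ∀ {u v}, IsTrajectory q G u v → ∀ i < m, 0 ≤ u (β i) →
    (∀ t ∈ Icc (β i) (α (i + 1)), u t < R) → v (α (i + 1)) < Y

/-- The steepest admissible downward initial speed from height `x`: it is `Y` at height `0` and
vanishes above `r`. -/
noncomputable def brake (Y r x : ℝ) : ℝ :=
  Y * max 0 (1 - x / r)

/-- Initial position of the shooting family at parameter `z`. -/
def startPos (R : ℝ) (z : ℝ × ℝ) : ℝ :=
  max 0 (min z.1 R)

/-- Initial velocity of the shooting family at parameter `z`; the last term fires the trajectory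
into the dead zone `u < 0` when `z.1 < 0`. -/
noncomputable def startVel (Y r R : ℝ) (z : ℝ × ℝ) : ℝ :=
  max z.2 (-brake Y r (startPos R z)) - 2 * Y * max (-z.1) 0

section Start

variable {Y r R : ℝ} {z : ℝ × ℝ}

theorem continuous_startPos : Continuous (startPos R) := by
  unfold startPos
  fun_prop

theorem continuous_startVel : Continuous (startVel Y r R) := by
  unfold startVel brake
  exact ((continuous_snd.max (by have := continuous_startPos (R := R); fun_prop)).sub (by fun_prop))

theorem startPos_of_nonpos (hz : z.1 ≤ 0) : startPos R z = 0 :=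
  max_eq_left ((min_le_left _ _).trans hz)

theorem startPos_le (hR : 0 ≤ R) : startPos R z ≤ R :=
  max_le hR (min_le_right _ _)

theorem brake_nonneg (hY : 0 ≤ Y) (x : ℝ) : 0 ≤ brake Y r x :=
  mul_nonneg hY (le_max_left _ _)

theorem brake_le (hY : 0 ≤ Y) (hr : 0 ≤ r) {x : ℝ} (hx : 0 ≤ x) : brake Y r x ≤ Y :=
  mul_le_of_le_one_right hY (max_le zero_le_one (sub_le_self _ (div_nonneg hx hr)))

theorem half_le_brake (hY : 0 ≤ Y) (hr : 0 < r) {x : ℝ} (hx : x ≤ r / 2) :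
    Y / 2 ≤ brake Y r x := by
  have hxr : x / r ≤ 1 / 2 := (div_le_iff₀ hr).2 (by linarith)
  rw [div_eq_mul_one_div]
  exact mul_le_mul_of_nonneg_left ((by linarith : 1 / 2 ≤ 1 - x / r).trans (le_max_right _ _)) hY

theorem startVel_nonneg (hr : 0 < r) (hz : r ≤ startPos R z) : 0 ≤ startVel Y r R z := by
  have hbrake : brake Y r (startPos R z) = 0 := by
    rw [brake, max_eq_left (sub_nonpos.2 ((one_le_div hr).2 hz)), mul_zero]
  have hz₁ : 0 ≤ z.1 := le_of_not_ge fun h => (hr.trans_le hz).ne' (startPos_of_nonpos h)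
  rw [startVel, hbrake, max_eq_right (neg_nonpos.2 hz₁), mul_zero, sub_zero, neg_zero]
  exact le_max_right _ _

theorem startVel_neg (hY : 0 < Y) (hz₁ : z.1 < 0) (hz₂ : z.2 < 2 * Y * -z.1) :
    startVel Y r R z < 0 := by
  rw [startVel, max_eq_left (neg_nonneg.2 hz₁.le), sub_neg]
  exact max_lt hz₂ ((neg_nonpos.2 (brake_nonneg hY.le _)).trans_lt
    (mul_pos (mul_pos two_pos hY) (neg_pos.2 hz₁)))

theorem startVel_eq_snd (hz₁ : 0 ≤ z.1) (hz₂ : -brake Y r (startPos R z) ≤ z.2) :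
    startVel Y r R z = z.2 := by
  rw [startVel, max_eq_left hz₂, max_eq_right (neg_nonpos.2 hz₁), mul_zero, sub_zero]

end Start

namespace Barriers

variable {q G : ℝ → ℝ} {m : ℕ} {α β : ℕ → ℝ} {r R Y : ℝ} {u v : ℝ → ℝ}

theorem R_pos (hb : Barriers q G m α β r R Y) : 0 < R :=
  hb.r_pos.trans hb.r_lt

theorem monotoneOn_left (hb : Barriers q G m α β r R Y) : MonotoneOn α (Iic m) :=
  monotoneOn_of_le_add_one ordConnected_Iic fun i _ _ hi =>
    ((hb.left_lt i hi).trans (hb.right_lt i hi)).le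

theorem Icc_left_succ_subset (hb : Barriers q G m α β r R Y) {i : ℕ} (hi : i < m) :
    Icc (α i) (α (i + 1)) ⊆ Icc (α 0) (α m) :=
  Icc_subset_Icc (hb.monotoneOn_left (Nat.zero_le m) hi.le (Nat.zero_le i))
    (hb.monotoneOn_left hi self_mem_Iic hi)

theorem Icc_subset (hb : Barriers q G m α β r R Y) {i : ℕ} (hi : i < m) :
    Icc (α i) (β i) ⊆ Icc (α 0) (α m) :=
  (Icc_subset_Icc_right (hb.right_lt i hi).le).trans (hb.Icc_left_succ_subset hi)

theorem neg_of_le (hb : Barriers q G m α β r R Y) (h : IsTrajectory q G u v) (hu₀ : 0 ≤ u (α 0))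
    {i : ℕ} (hi : i < m) {t : ℝ} (ht : t ∈ Icc (α i) (β i)) (hRt : R ≤ u t) : u (β i) < 0 := by
  by_contra! hβ
  refine (hb.lt_of_nonneg h i hi (fun s hs => le_of_not_gt fun hus => hβ.not_gt ?_) t ht).not_ge hRt
  exact h.neg_of_neg hb.intervalIntegrable hb.isAdmissible hu₀ hus (hb.Icc_subset hi hs).1 hs.2

theorem neg_of_le_left (hb : Barriers q G m α β r R Y) (h : IsTrajectory q G u v)
    (hu₀ : 0 ≤ u (α 0)) {i : ℕ} (hi : i < m) (hR : R ≤ u (α i)) {t : ℝ} (ht : α (i + 1) ≤ t) :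
    u t < 0 := by
  have hβ := hb.neg_of_le h hu₀ hi (left_mem_Icc.2 (hb.left_lt i hi).le) hR
  have hαβ : α 0 ≤ β i := (hb.Icc_subset hi (right_mem_Icc.2 (hb.left_lt i hi).le)).1
  exact h.neg_of_neg hb.intervalIntegrable hb.isAdmissible hu₀ hβ hαβ
    ((hb.right_lt i hi).le.trans ht)

theorem vel_nonneg_of_max_eq (hb : Barriers q G m α β r R Y) (h : IsTrajectory q G u v)
    (hu₀ : 0 ≤ u (α 0)) (hv₀ : r ≤ u (α 0) → 0 ≤ v (α 0)) {i : ℕ} (hi : i < m)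
    (hmax : ∃ t ∈ Icc (α i) (β i), u t = r) : 0 ≤ v (α i) := by
  by_contra! hneg
  have hle : r ≤ u (α i) := by
    obtain ⟨t, ht, rfl⟩ := hmax
    have hv := h.antitoneOn_vel hb.isAdmissible.nonneg (hb.weight_nonneg i hi)
    nlinarith [le_tangent_of_antitoneOn h.hasDerivAt hv (left_mem_Icc.2 (hb.left_lt i hi).le) ht,
      ht.1]
  cases i with
  | zero => exact hneg.not_ge (hv₀ hle)
  | succ j =>
    have hj : j < m := j.lt_succ_self.trans hi
    have hRβ : R ≤ u (β j) :=
      hb.le_of_vel_nonpos h j hj hneg.le ((half_le_self hb.r_pos.le).trans hle)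
    have hβ := hb.neg_of_le h hu₀ hj (right_mem_Icc.2 (hb.left_lt j hj).le) hRβ
    linarith [hb.R_pos]

section Closed

variable (hb : Barriers q G m α β r R Y) (h : IsTrajectory q G u v) (hu₀ : 0 ≤ u (α 0))
  (hclosed : u (α m) = u (α 0))

include hb h hu₀ hclosed

theorem nonneg_of_closed : ∀ t ∈ Icc (α 0) (α m), 0 ≤ u t := fun _ ht =>
  le_of_not_gt fun hut => (hclosed ▸ hu₀).not_gt
    (h.neg_of_neg hb.intervalIntegrable hb.isAdmissible hu₀ hut ht.1 ht.2)

theorem lt_on_left_of_closed {i : ℕ} (hi : i < m) : ∀ t ∈ Icc (α i) (β i), u t < R :=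
  hb.lt_of_nonneg h i hi fun t ht =>
    hb.nonneg_of_closed h hu₀ hclosed t (hb.Icc_subset hi ht)

theorem lt_of_closed (hm : 0 < m) : ∀ t ∈ Icc (α 0) (α m), u t < R := by
  intro t ht
  have hlt := fun {i} => hb.lt_on_left_of_closed h hu₀ hclosed (i := i)
  have hα : ∀ i ≤ m, u (α i) < R := fun i him => by
    rcases him.lt_or_eq with hi | rfl
    · exact hlt hi _ (left_mem_Icc.2 (hb.left_lt i hi).le)
    · exact hclosed ▸ hlt hm _ (left_mem_Icc.2 (hb.left_lt 0 hm).le)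
  obtain ⟨i, hi, hti⟩ := exists_mem_Icc_succ hm ht
  rcases le_total t (β i) with htβ | hβt
  · exact hlt hi t ⟨hti.1, htβ⟩
  · exact lt_of_monotoneOn_of_lt h.hasDerivAt
      (h.monotoneOn_vel hb.isAdmissible.nonneg (hb.weight_nonpos i hi))
      (hlt hi _ (right_mem_Icc.2 (hb.left_lt i hi).le)) (hα (i + 1) hi) ⟨hβt, hti.2⟩

theorem neg_brake_lt_vel (hm : 0 < m) : -brake Y r (u (α 0)) < v (α m) := by
  obtain ⟨n, rfl⟩ := Nat.exists_eq_succ_of_ne_zero hm.ne'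
  have hn := n.lt_succ_self
  by_contra! hle
  refine (hb.lt_on_left_of_closed h hu₀ hclosed hn _
    (right_mem_Icc.2 (hb.left_lt n hn).le)).not_ge ?_
  rcases le_total (r / 2) (u (α 0)) with hr | hr
  · exact hb.le_of_vel_nonpos h n hn
      (hle.trans (neg_nonpos.2 (brake_nonneg hb.Y_pos.le _))) (hr.trans_eq hclosed.symm)
  · exact hb.le_of_vel_le h n hn (hle.trans (neg_le_neg (half_le_brake hb.Y_pos.le hb.r_pos hr)))
      (hu₀.trans_eq hclosed.symm)

theorem vel_lt_of_closed (hm : 0 < m) : v (α m) < Y := by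
  obtain ⟨n, rfl⟩ := Nat.exists_eq_succ_of_ne_zero hm.ne'
  have hn := n.lt_succ_self
  have hsub := hb.Icc_left_succ_subset hn
  exact hb.vel_lt h n hn
    (hb.nonneg_of_closed h hu₀ hclosed _ (hsub ⟨(hb.left_lt n hn).le, (hb.right_lt n hn).le⟩))
    fun t ht => hb.lt_of_closed h hu₀ hclosed hm t (hsub ⟨(hb.left_lt n hn).le.trans ht.1, ht.2⟩)

end Closed

end Barriers

/-- A family of trajectories depending continuously on the parameter `z`, with position
`startPos R z` and velocity `startVel Y r R z` at time `t₀`. -/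
structure IsShootingFamily (q G : ℝ → ℝ) (t₀ r R Y : ℝ) (u v : ℝ × ℝ → ℝ → ℝ) : Prop where
  isTrajectory : ∀ z, IsTrajectory q G (u z) (v z)
  continuous_pos : Continuous (Function.uncurry u)
  continuous_vel : Continuous (Function.uncurry v)
  pos_start : ∀ z, u z t₀ = startPos R z
  vel_start : ∀ z, v z t₀ = startVel Y r R z

theorem exists_isShootingFamily {q G : ℝ → ℝ} (hq : ∀ a b, IntervalIntegrable q volume a b)
    (hG : IsAdmissible G) (t₀ r R Y : ℝ) : ∃ u v, IsShootingFamily q G t₀ r R Y u v := by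
  obtain ⟨φ, hφ, hφ₀, hφt⟩ := exists_flow_isTrajectory hq hG t₀
  let p : ℝ × ℝ → ℝ × ℝ := fun z => (startPos R z, startVel Y r R z)
  have hp : Continuous p := continuous_startPos.prodMk continuous_startVel
  have hφp : Continuous fun x : (ℝ × ℝ) × ℝ => φ (p x.1) x.2 :=
    hφ.comp ((hp.comp continuous_fst).prodMk continuous_snd)
  exact ⟨fun z t => (φ (p z) t).1, fun z t => (φ (p z) t).2, fun z => hφt (p z), hφp.fst, hφp.snd,
    fun z => congrArg Prod.fst (hφ₀ (p z)), fun z => congrArg Prod.snd (hφ₀ (p z))⟩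

namespace IsShootingFamily

variable {q G : ℝ → ℝ} {m : ℕ} {α β : ℕ → ℝ} {r R Y : ℝ} {u v : ℝ × ℝ → ℝ → ℝ}

theorem pos_start_nonneg {t₀ : ℝ} (hu : IsShootingFamily q G t₀ r R Y u v) (z : ℝ × ℝ) :
    0 ≤ u z t₀ :=
  (hu.pos_start z).symm ▸ le_max_left _ _

theorem nonpos_of_start {t₀ : ℝ} (hu : IsShootingFamily q G t₀ r R Y u v)
    (hq : ∀ a b, IntervalIntegrable q volume a b) (hG : IsAdmissible G) (hY : 0 < Y) {z : ℝ × ℝ}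
    (hz₁ : z.1 < 0) (hz₂ : z.2 < 2 * Y * -z.1) {t : ℝ} (ht : t₀ ≤ t) : u z t ≤ 0 := by
  have hline : ∀ s, t₀ ≤ s → u z t₀ + v z t₀ * (s - t₀) ≤ 0 := fun s hs => by
    rw [hu.pos_start, hu.vel_start, startPos_of_nonpos hz₁.le, zero_add]
    exact mul_nonpos_of_nonpos_of_nonneg (startVel_neg hY hz₁ hz₂).le (sub_nonneg.2 hs)
  rw [(hu.isTrajectory z).eq_line hq hG fun s hs => hline s (uIcc_of_le ht ▸ hs).1]
  exact hline t ht

theorem le_of_peak_eq (hu : IsShootingFamily q G (α 0) r R Y u v)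
    (hb : Barriers q G m α β r R Y) {z : ℝ × ℝ} {i : ℕ} (hi : i < m)
    (hpeak : peak (u z) (α i) (β i) = r) : R ≤ u z (α (i + 1)) := by
  have h := hu.isTrajectory z
  have hmax : ∃ t ∈ Icc (α i) (β i), u z t = r :=
    hpeak ▸ exists_eq_peak h.continuous_pos (hb.left_lt i hi).le
  refine hb.le_of_max_eq h i hi (hb.vel_nonneg_of_max_eq h (hu.pos_start_nonneg z) ?_ hi hmax)
    (fun t ht => hpeak ▸ le_peak h.continuous_pos ht) hmax
  rw [hu.pos_start, hu.vel_start]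
  exact startVel_nonneg hb.r_pos

theorem exists_itinerary_map (hu : IsShootingFamily q G (α 0) r R Y u v)
    (hb : Barriers q G m α β r R Y) (S : Set ℕ) :
    ∃ H : ℝ × ℝ → ℝ, Continuous H ∧ (∀ y ≤ Y, H (-1, y) ≤ 0) ∧ (∀ y, 0 ≤ H (R, y)) ∧
      ∀ z, H z = 0 → u z (α m) = u z (α 0) ∧ ∀ k < m,
        (k ∈ S → r ≤ peak (u z) (α k) (β k)) ∧ (k ∉ S → peak (u z) (α k) (β k) ≤ r) := by
  let D : ℕ → Set (ℝ × ℝ) := fun k => {z | ∀ t ∈ Icc (α k) (α m), u z t ≤ 0}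
  let B : ℕ → Set (ℝ × ℝ) := fun k => {z | R ≤ u z (α k)}
  have hcont : ∀ t, Continuous fun z => u z t := fun t =>
    hu.continuous_pos.comp (Continuous.prodMk_left t)
  have hcont_pos := fun z => (hu.isTrajectory z).continuous_pos
  obtain ⟨H, hH, hHD, hHB, hH₀⟩ := exists_continuous_itinerary (D := D) (B := B) (r := r)
    (M := fun k z => peak (u z) (α k) (β k)) (f := fun z => u z (α m) - startPos R z) S
    (fun k _ => IsCompact.continuous_sSup isCompact_Icc hu.continuous_pos)
    ((hcont (α m)).sub continuous_startPos)
    (fun k hk z hz => by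
      obtain ⟨t, ht, hut⟩ := exists_eq_peak (hcont_pos z) (hb.left_lt k hk).le
      exact hut ▸ (hz t ⟨ht.1, (hb.Icc_subset hk ht).2⟩).trans_lt hb.r_pos)
    (fun k hk z hz t ht => hz t
      ⟨((hb.left_lt k hk).trans (hb.right_lt k hk)).le.trans ht.1, ht.2⟩)
    (fun k hk z hz => hb.r_lt.trans_le (le_trans hz (le_peak (hcont_pos z)
      (left_mem_Icc.2 (hb.left_lt k hk).le))))
    (fun k hk z hz t ht =>
      (hb.neg_of_le_left (hu.isTrajectory z) (hu.pos_start_nonneg z) hk hz ht.1).le)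
    (fun k hk z hz => hu.le_of_peak_eq hb hk hz)
    (fun z hz => sub_nonpos.2 ((hz (α m) (right_mem_Icc.2 le_rfl)).trans (le_max_left _ _)))
    (fun z hz => sub_nonneg.2 ((startPos_le hb.R_pos.le).trans hz))
  refine ⟨H, hH, fun y hy => hHD _ fun t ht => ?_, fun y => hHB _ ?_, fun z hz => ?_⟩
  · refine hu.nonpos_of_start hb.intervalIntegrable hb.isAdmissible hb.Y_pos ?_ ?_ ht.1 <;>
      linarith [hb.Y_pos]
  · change R ≤ u (R, y) (α 0)
    rw [hu.pos_start, startPos, min_self]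
    exact le_max_right _ _
  · rw [hu.pos_start, ← sub_eq_zero]
    exact hH₀ z hz

theorem start_nonneg_of_closed (hu : IsShootingFamily q G (α 0) r R Y u v)
    (hb : Barriers q G m α β r R Y) {z : ℝ × ℝ} (hclosed : u z (α m) = u z (α 0))
    (hz : z.2 = v z (α m)) {k : ℕ} (hk : k < m) (hpeak : 0 < peak (u z) (α k) (β k)) :
    0 ≤ z.1 := by
  have h := hu.isTrajectory z
  have hm : 0 < m := k.zero_le.trans_lt hk
  have hαm : α 0 < α m := (hb.left_lt 0 hm).trans_le
    (hb.Icc_subset hm (right_mem_Icc.2 (hb.left_lt 0 hm).le)).2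
  by_contra! hneg
  have hpos₀ : u z (α m) = 0 := by rw [hclosed, hu.pos_start, startPos_of_nonpos hneg.le]
  have hvel₀ : v z (α m) ≤ 0 := nonpos_of_hasDerivAt_of_forall_nonneg hαm (h.hasDerivAt _)
    (hb.nonneg_of_closed h (hu.pos_start_nonneg z) hclosed) hpos₀
  obtain ⟨t, ht, hut⟩ := exists_eq_peak h.continuous_pos (hb.left_lt k hk).le
  have hut₀ : u z t ≤ 0 := hu.nonpos_of_start hb.intervalIntegrable hb.isAdmissible hb.Y_pos hneg
    (by nlinarith [hb.Y_pos]) (hb.Icc_subset hk ht).1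
  exact hpeak.not_ge (hut ▸ hut₀)

theorem exists_closed (hu : IsShootingFamily q G (α 0) r R Y u v)
    (hb : Barriers q G m α β r R Y) {S : Set ℕ} (hS : ∃ k < m, k ∈ S) :
    ∃ z, u z (α m) = u z (α 0) ∧ v z (α m) = v z (α 0) ∧ ∀ k < m,
      (k ∈ S → r ≤ peak (u z) (α k) (β k)) ∧ (k ∉ S → peak (u z) (α k) (β k) ≤ r) := by
  obtain ⟨H, hH, hH_left, hH_right, hH₀⟩ := hu.exists_itinerary_map hb S
  have hY := hb.Y_pos
  have hvel : Continuous fun z => v z (α m) := hu.continuous_vel.comp (Continuous.prodMk_left _)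
  obtain ⟨z, -, hz₁, hz₂⟩ := poincare_miranda (by linarith [hb.R_pos] : (-1 : ℝ) ≤ R)
    (by linarith : -Y ≤ Y) hH.continuousOn
    (f₂ := fun z => z.2 - max (-Y) (min (v z (α m)) Y)) (by fun_prop)
    (fun y hy => hH_left y hy.2) (fun y _ => hH_right y)
    (fun x _ => sub_nonpos.2 (le_max_left _ _))
    (fun x _ => sub_nonneg.2 (max_le (by linarith) (min_le_right _ _)))
  obtain ⟨hclosed, hS_peak⟩ := hH₀ z hz₁
  refine ⟨z, hclosed, ?_, hS_peak⟩
  obtain ⟨k, hk, hkS⟩ := hS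
  have h := hu.isTrajectory z
  have hu₀ := hu.pos_start_nonneg z
  have hm : 0 < m := k.zero_le.trans_lt hk
  have hbrake := hb.neg_brake_lt_vel h hu₀ hclosed hm
  have hsnd : z.2 = v z (α m) := by
    have hclip := sub_eq_zero.1 hz₂
    rwa [min_eq_left (hb.vel_lt_of_closed h hu₀ hclosed hm).le, max_eq_right] at hclip
    linarith [brake_le hY.le hb.r_pos.le hu₀]
  have hfst := hu.start_nonneg_of_closed hb hclosed hsnd hk
    (hb.r_pos.trans_le ((hS_peak k hk).1 hkS))
  rw [hu.vel_start, startVel_eq_snd hfst, hsnd]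
  rw [hsnd, ← hu.pos_start]
  exact hbrake.le

end IsShootingFamily

theorem Barriers.exists_closed_trajectory {q G : ℝ → ℝ} {m : ℕ} {α β : ℕ → ℝ} {r R Y : ℝ}
    (hb : Barriers q G m α β r R Y) {S : Set ℕ} (hS : ∃ k < m, k ∈ S) :
    ∃ u v, IsTrajectory q G u v ∧ u (α m) = u (α 0) ∧ v (α m) = v (α 0) ∧
      (∀ t ∈ Icc (α 0) (α m), 0 ≤ u t ∧ u t < R) ∧ ∀ k < m,
        (k ∈ S → ∃ t ∈ Icc (α k) (β k), r < u t) ∧ (k ∉ S → ∀ t ∈ Icc (α k) (β k), u t < r) := by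
  obtain ⟨u, v, hu⟩ := exists_isShootingFamily hb.intervalIntegrable hb.isAdmissible (α 0) r R Y
  obtain ⟨z, hclosed, hvel, hpeak⟩ := hu.exists_closed hb hS
  have h := hu.isTrajectory z
  have hm : 0 < m := hS.elim fun k hk => k.zero_le.trans_lt hk.1
  have hlt := hb.lt_of_closed h (hu.pos_start_nonneg z) hclosed hm
  have hne : ∀ k < m, peak (u z) (α k) (β k) ≠ r := fun k hk hr =>
    (hu.le_of_peak_eq hb hk hr).not_gt
      (hlt _ (hb.Icc_left_succ_subset hk (right_mem_Icc.2 ((hb.left_lt k hk).trans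
        (hb.right_lt k hk)).le)))
  refine ⟨u z, v z, h, hclosed, hvel,
    fun t ht => ⟨hb.nonneg_of_closed h (hu.pos_start_nonneg z) hclosed t ht, hlt t ht⟩,
    fun k hk => ⟨fun hkS => ?_, fun hkS t ht => ?_⟩⟩
  · obtain ⟨t, ht, hut⟩ := exists_eq_peak h.continuous_pos (hb.left_lt k hk).le
    exact ⟨t, ht, hut ▸ ((hpeak k hk).1 hkS).lt_of_ne' (hne k hk)⟩
  · exact (le_peak h.continuous_pos ht).trans_lt (((hpeak k hk).2 hkS).lt_of_ne (hne k hk))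

end Shooting

section LinearTruncation

open scoped NNReal

/-- The restriction of `g` to `[0, R]`, continued by the constant `g 0` to the left and by a
half-line of slope `g R / R` to the right: it keeps the superlinear lower bounds of `g` and, for
`g 0 = 0`, is globally Lipschitz and admissible. -/
noncomputable def linearTruncation (g : ℝ → ℝ) (R s : ℝ) : ℝ :=
  g (max 0 (min s R)) + g R / R * max (s - R) 0

variable {g : ℝ → ℝ} {R s : ℝ}

theorem linearTruncation_of_le (hs : s ≤ R) : linearTruncation g R s = g (max 0 s) := by
  rw [linearTruncation, min_eq_left hs, max_eq_right (sub_nonpos.2 hs), mul_zero, add_zero]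

theorem linearTruncation_of_mem (hs : s ∈ Icc 0 R) : linearTruncation g R s = g s := by
  rw [linearTruncation_of_le hs.2, max_eq_right hs.1]

theorem linearTruncation_of_ge (hR : 0 < R) (hs : R ≤ s) :
    linearTruncation g R s = g R / R * s := by
  rw [linearTruncation, min_eq_right hs, max_eq_right hR.le, max_eq_left (sub_nonneg.2 hs)]
  field_simp
  ring

theorem lipschitzWith_linearTruncation {Λ : ℝ≥0} (hR : 0 ≤ R)
    (hg : LipschitzOnWith Λ g (Icc 0 R)) :
    LipschitzWith (Λ + ‖g R / R‖₊) (linearTruncation g R) := by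
  have hclamp : LipschitzWith 1 fun s : ℝ => max 0 (min s R) :=
    (LipschitzWith.id.min_const R).const_max 0
  have hexcess : LipschitzWith 1 fun s : ℝ => max (s - R) 0 :=
    (LipschitzWith.of_le_add fun x y => by
      have := Real.le_norm_self (x - y)
      rw [dist_eq_norm]; linarith).max_const 0
  have hinner : LipschitzWith (Λ * 1) fun s => g (max 0 (min s R)) :=
    lipschitzOnWith_univ.1 <| hg.comp (hclamp.lipschitzOnWith (s := univ)) fun s _ =>
      ⟨le_max_left _ _, max_le hR (min_le_right _ _)⟩
  have houter : LipschitzWith (‖g R / R‖₊ * 1) fun s : ℝ => g R / R * max (s - R) 0 :=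
    (lipschitzWith_smul (g R / R)).comp hexcess
  have hsum := hinner.add houter
  rwa [mul_one, mul_one] at hsum

theorem isAdmissible_linearTruncation (hR : 0 ≤ R) (hlip : LocallyLipschitzOn (Ici 0) g)
    (hg₀ : g 0 = 0) (hg : ∀ s, 0 ≤ s → 0 ≤ g s) : IsAdmissible (linearTruncation g R) where
  exists_lipschitzWith :=
    have ⟨_, hΛ⟩ := (hlip.mono Icc_subset_Ici_self).exists_lipschitzOnWith_of_compact isCompact_Icc
    ⟨_, lipschitzWith_linearTruncation hR hΛ⟩
  nonneg _ := add_nonneg (hg _ (le_max_left _ _))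
    (mul_nonneg (div_nonneg (hg R hR) hR) (le_max_right _ _))
  eq_zero_of_nonpos s hs := by rw [linearTruncation_of_le (hs.trans hR), max_eq_left hs, hg₀]

theorem mul_le_linearTruncation {K s₀ : ℝ} (hs₀ : 0 < s₀) (hR : s₀ ≤ R)
    (hg : ∀ s, s₀ ≤ s → K * s ≤ g s) (hs : s₀ ≤ s) : K * s ≤ linearTruncation g R s := by
  have hR₀ := hs₀.trans_le hR
  rcases le_total s R with hsR | hRs
  · exact (hg s hs).trans_eq (linearTruncation_of_mem ⟨hs₀.le.trans hs, hsR⟩).symm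
  · rw [linearTruncation_of_ge hR₀ hRs]
    exact mul_le_mul_of_nonneg_right ((le_div_iff₀ hR₀).2 (hg R hR)) (hs₀.le.trans hs)

theorem exists_pos_le_linearTruncation {c : ℝ} (hg : ContinuousOn g (Ici 0))
    (hpos : ∀ s, 0 < s → 0 < g s) (hc : 0 < c) (hcR : c ≤ R) :
    ∃ κ, 0 < κ ∧ ∀ s, c ≤ s → κ ≤ linearTruncation g R s := by
  have hR := hc.trans_le hcR
  obtain ⟨x, hx, hmin⟩ := isCompact_Icc.exists_isMinOn (nonempty_Icc.2 hcR)
    (hg.mono fun s (hs : s ∈ Icc c R) => hc.le.trans hs.1)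
  refine ⟨g x, hpos x (hc.trans_le hx.1), fun s hs => ?_⟩
  rcases le_total s R with hsR | hRs
  · exact (hmin ⟨hs, hsR⟩).trans_eq (linearTruncation_of_mem ⟨hc.le.trans hs, hsR⟩).symm
  · calc g x ≤ g R := hmin (right_mem_Icc.2 hcR)
      _ ≤ g R / R * s := by
          rw [div_mul_eq_mul_div, le_div_iff₀ hR]
          exact mul_le_mul_of_nonneg_left hRs (hpos R hR).le
      _ = linearTruncation g R s := (linearTruncation_of_ge hR hRs).symm

end LinearTruncation

section Weight

/-- The weight `a⁺ - μ a⁻` of the indefinite equation. -/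
def signedWeight (a : ℝ → ℝ) (μ t : ℝ) : ℝ :=
  max (a t) 0 - μ * max (-a t) 0

variable {a : ℝ → ℝ} {μ t : ℝ}

theorem signedWeight_of_nonneg (h : 0 ≤ a t) : signedWeight a μ t = |a t| := by
  rw [signedWeight, max_eq_left h, max_eq_right (neg_nonpos.2 h), mul_zero, sub_zero,
    abs_of_nonneg h]

theorem neg_signedWeight_of_nonpos (h : a t ≤ 0) : -signedWeight a μ t = μ * |a t| := by
  rw [signedWeight, max_eq_right h, max_eq_left (neg_nonneg.2 h), zero_sub, neg_neg,
    abs_of_nonpos h]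

theorem intervalIntegrable_signedWeight (ha : ∀ x y, IntervalIntegrable a volume x y) (μ x y : ℝ) :
    IntervalIntegrable (signedWeight a μ) volume x y :=
  have hpos : IntervalIntegrable (fun t => max (a t) 0) volume x y :=
    ⟨(ha x y).1.pos_part, (ha x y).2.pos_part⟩
  have hneg : IntervalIntegrable (fun t => max (-a t) 0) volume x y :=
    ⟨(ha x y).1.neg.pos_part, (ha x y).2.neg.pos_part⟩
  hpos.sub (hneg.const_mul μ)

theorem periodic_signedWeight {T : ℝ} (ha : Function.Periodic a T) (μ : ℝ) :
    Function.Periodic (signedWeight a μ) T := fun t => by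
  rw [signedWeight, ha t, signedWeight]

theorem integral_congr_of_ae_Icc {f g : ℝ → ℝ} {a b x y : ℝ}
    (h : ∀ᵐ t ∂volume.restrict (Icc a b), f t = g t) (ha : a ≤ x) (hxy : x ≤ y) (hb : y ≤ b) :
    ∫ t in x..y, f t = ∫ t in x..y, g t :=
  intervalIntegral.integral_congr_ae_restrict <| ae_mono (Measure.restrict_mono
    ((uIoc_of_le hxy).trans_subset (Ioc_subset_Icc_self.trans (Icc_subset_Icc ha hb))) le_rfl) h

end Weight

section Margin

open scoped Topology

theorem integral_abs_pos_of_not_ae_eq_zero {f : ℝ → ℝ} {a b : ℝ} (hab : a ≤ b)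
    (hf : IntervalIntegrable f volume a b)
    (hne : ¬ ∀ᵐ t ∂volume.restrict (Icc a b), f t = 0) : 0 < ∫ t in a..b, |f t| := by
  refine (intervalIntegral.integral_nonneg hab fun t _ => abs_nonneg (f t)).lt_of_ne fun h => hne ?_
  rw [intervalIntegral.integral_of_le hab, ← integral_Icc_eq_integral_Ioc] at h
  have hint : Integrable (fun t => |f t|) (volume.restrict (Icc a b)) :=
    ((intervalIntegrable_iff_integrableOn_Icc_of_le hab).1 hf).abs
  filter_upwards [(integral_eq_zero_iff_of_nonneg (fun t => abs_nonneg (f t)) hint).1 h.symm]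
    with t ht using abs_eq_zero.1 ht

theorem eventually_le_integral_abs {f : ℝ → ℝ} {a b : ℝ}
    (hf : ∀ x y, IntervalIntegrable f volume x y) (hab : a < b)
    (hne : ¬ ∀ᵐ t ∂volume.restrict (Icc a b), f t = 0) :
    ∀ᶠ d in 𝓝[>] (0 : ℝ), a + 2 * d < b ∧ d ≤ ∫ t in (a + d)..(b - d), |f t| := by
  have hpos := integral_abs_pos_of_not_ae_eq_zero hab.le (hf a b) hne
  have hprim := intervalIntegral.continuous_primitive (fun x y => (hf x y).abs) 0
  have hcont : Continuous fun d => ∫ t in (a + d)..(b - d), |f t| := by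
    have heq : (fun d => ∫ t in (a + d)..(b - d), |f t|) =
        fun d => (∫ t in (0 : ℝ)..(b - d), |f t|) - ∫ t in (0 : ℝ)..(a + d), |f t| :=
      funext fun d => (intervalIntegral.integral_interval_sub_left (hf _ _).abs (hf _ _).abs).symm
    rw [heq]
    exact (hprim.comp (continuous_const.sub continuous_id)).sub
      (hprim.comp (continuous_const.add continuous_id))
  have hgap : ∀ᶠ d in 𝓝 (0 : ℝ), a + 2 * d < b :=
    ContinuousAt.eventually_lt (by fun_prop) continuousAt_const (by simpa using hab)
  have hmass : ∀ᶠ d in 𝓝 (0 : ℝ), d < ∫ t in (a + d)..(b - d), |f t| :=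
    continuous_id.continuousAt.eventually_lt hcont.continuousAt (by simpa using hpos)
  filter_upwards [nhdsWithin_le_nhds hgap, nhdsWithin_le_nhds hmass] with d h₁ h₂ using ⟨h₁, h₂.le⟩

/-- A quantitative form of the sign condition: `a ≥ 0` on `[α i, β i]` and `a ≤ 0` on
`[β i, α (i+1)]`, and each of these subintervals of `[0, T]` carries a mass at least `d` of `|a|` at
distance at least `d` from its ends. -/
structure SignMargin (a : ℝ → ℝ) (T : ℝ) (m : ℕ) (α β : ℕ → ℝ) (d : ℝ) : Prop where
  intervalIntegrable : ∀ x y, IntervalIntegrable a volume x y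
  pos : 0 < d
  left_nonneg : ∀ i < m, 0 ≤ α i
  right_nonneg : ∀ i < m, 0 ≤ β i
  right_le : ∀ i < m, β i ≤ T
  succ_le : ∀ i < m, α (i + 1) ≤ T
  left_gap : ∀ i < m, α i + 2 * d < β i
  right_gap : ∀ i < m, β i + 2 * d < α (i + 1)
  weight_nonneg : ∀ i < m, ∀ᵐ t ∂volume.restrict (Icc (α i) (β i)), 0 ≤ a t
  weight_nonpos : ∀ i < m, ∀ᵐ t ∂volume.restrict (Icc (β i) (α (i + 1))), a t ≤ 0
  left_mass : ∀ i < m, d ≤ ∫ t in (α i + d)..(β i - d), |a t|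
  right_mass : ∀ i < m, d ≤ ∫ t in (β i + d)..(α (i + 1) - d), |a t|

theorem SignCond.exists_signMargin {a : ℝ → ℝ} {T : ℝ} {m : ℕ} (h : SignCond a T m)
    (ha : ∀ x y, IntervalIntegrable a volume x y) :
    ∃ α β d, α 0 = 0 ∧ α m = T ∧ SignMargin a T m α β d := by
  obtain ⟨σ, hσ₀, hσT, hσ, hpos, hneg⟩ := h
  have hmono : MonotoneOn σ (Iic (2 * m)) := monotoneOn_of_le_succ ordConnected_Iic
    fun i _ _ hi => (hσ i (Nat.lt_of_succ_le hi)).le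
  have hσ_nonneg : ∀ i ≤ 2 * m, 0 ≤ σ i := fun i hi =>
    hσ₀.symm.trans_le (hmono (Nat.zero_le _) hi (Nat.zero_le i))
  have hσ_le : ∀ i ≤ 2 * m, σ i ≤ T := fun i hi => (hmono hi self_mem_Iic hi).trans_eq hσT
  have hleft : ∀ᶠ d in 𝓝[>] (0 : ℝ), ∀ i ∈ Iio m, σ (2 * i) + 2 * d < σ (2 * i + 1) ∧
      d ≤ ∫ t in (σ (2 * i) + d)..(σ (2 * i + 1) - d), |a t| :=
    (eventually_all_finite (finite_Iio m)).2 fun i (hi : i < m) =>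
      eventually_le_integral_abs ha (hσ _ (by lia)) (hpos i hi).2
  have hright : ∀ᶠ d in 𝓝[>] (0 : ℝ), ∀ i ∈ Iio m, σ (2 * i + 1) + 2 * d < σ (2 * i + 2) ∧
      d ≤ ∫ t in (σ (2 * i + 1) + d)..(σ (2 * i + 2) - d), |a t| :=
    (eventually_all_finite (finite_Iio m)).2 fun i (hi : i < m) =>
      eventually_le_integral_abs ha (hσ _ (by lia)) (by simpa using (hneg i hi).2)
  obtain ⟨d, ⟨hl, hr⟩, hd⟩ := ((hleft.and hright).and self_mem_nhdsWithin).exists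
  exact ⟨fun i => σ (2 * i), fun i => σ (2 * i + 1), d, hσ₀, hσT,
    { intervalIntegrable := ha
      pos := hd
      left_nonneg := fun i hi => hσ_nonneg _ (by lia)
      right_nonneg := fun i hi => hσ_nonneg _ (by lia)
      right_le := fun i hi => hσ_le _ (by lia)
      succ_le := fun i hi => hσ_le _ (by lia)
      left_gap := fun i hi => (hl i hi).1
      right_gap := fun i hi => (hr i hi).1
      weight_nonneg := fun i hi => (hpos i hi).1
      weight_nonpos := fun i hi => (hneg i hi).1.mono fun _ => neg_nonneg.1
      left_mass := fun i hi => (hl i hi).2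
      right_mass := fun i hi => (hr i hi).2 }⟩

end Margin

section Barriers

/-- The scales of `G` relative to an indefinite weight on `[0, T]` of margin `d` and mass at most
`A`: `G` is steep above `d * R / T`, flat below `r`, and bounded away from zero beyond `r / 2`. -/
structure Thresholds (G : ℝ → ℝ) (T A d r R : ℝ) : Prop where
  isAdmissible : IsAdmissible G
  r_pos : 0 < r
  r_lt : r < R
  steep : ∃ K s₀, 0 ≤ K ∧ 2 * T < K * d ^ 3 ∧ 0 ≤ s₀ ∧ s₀ * T ≤ d * R ∧ ∀ s, s₀ ≤ s → K * s ≤ G s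
  flat : ∃ E, 4 * (E * A * T) ≤ r ∧ ∀ s ≤ r, G s ≤ E
  exists_pos_le : ∃ κ, 0 < κ ∧ ∀ s, r / 2 ≤ s → κ ≤ G s

theorem IsAdmissible.exists_forall_lt_le {G : ℝ → ℝ} (hG : IsAdmissible G) {R : ℝ} (hR : 0 ≤ R) :
    ∃ B, 0 ≤ B ∧ ∀ s < R, G s ≤ B := by
  obtain ⟨x, -, hx⟩ := isCompact_Icc.exists_isMaxOn (nonempty_Icc.2 hR) hG.continuous.continuousOn
  refine ⟨G x, hG.nonneg x, fun s hs => ?_⟩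
  rcases le_total s 0 with hs₀ | hs₀
  · exact (hG.eq_zero_of_nonpos s hs₀).trans_le (hG.nonneg x)
  · exact hx ⟨hs₀, hs.le⟩

namespace SignMargin

variable {a G u v : ℝ → ℝ} {α β : ℕ → ℝ} {T A d r R μ κ : ℝ} {m i : ℕ}

theorem left_lt (h : SignMargin a T m α β d) (hi : i < m) : α i < β i := by
  linarith [h.left_gap i hi, h.pos]

theorem right_lt (h : SignMargin a T m α β d) (hi : i < m) : β i < α (i + 1) := by
  linarith [h.right_gap i hi, h.pos]

theorem margin_le_period (h : SignMargin a T m α β d) (hi : i < m) : d ≤ T := by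
  linarith [h.left_gap i hi, h.pos, h.left_nonneg i hi, h.right_le i hi]

theorem signedWeight_ae_eq (h : SignMargin a T m α β d) (μ : ℝ) (hi : i < m) :
    ∀ᵐ t ∂volume.restrict (Icc (α i) (β i)), signedWeight a μ t = |a t| :=
  (h.weight_nonneg i hi).mono fun _ => signedWeight_of_nonneg

theorem neg_signedWeight_ae_eq (h : SignMargin a T m α β d) (μ : ℝ) (hi : i < m) :
    ∀ᵐ t ∂volume.restrict (Icc (β i) (α (i + 1))), -signedWeight a μ t = μ * |a t| :=
  (h.weight_nonpos i hi).mono fun _ => neg_signedWeight_of_nonpos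

theorem signedWeight_nonneg (h : SignMargin a T m α β d) (μ : ℝ) (hi : i < m) :
    ∀ᵐ t ∂volume.restrict (Icc (α i) (β i)), 0 ≤ signedWeight a μ t :=
  (h.signedWeight_ae_eq μ hi).mono fun _ ht => ht.symm ▸ abs_nonneg _

theorem signedWeight_nonpos (h : SignMargin a T m α β d) (hμ : 0 ≤ μ) (hi : i < m) :
    ∀ᵐ t ∂volume.restrict (Icc (β i) (α (i + 1))), signedWeight a μ t ≤ 0 :=
  (h.neg_signedWeight_ae_eq μ hi).mono fun _ ht =>
    neg_nonneg.1 (ht.symm ▸ mul_nonneg hμ (abs_nonneg _))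

theorem le_integral_signedWeight (h : SignMargin a T m α β d) (μ : ℝ) (hi : i < m) :
    d ≤ ∫ t in (α i + d)..(β i - d), signedWeight a μ t := by
  have hgap := h.left_gap i hi
  rw [integral_congr_of_ae_Icc (h.signedWeight_ae_eq μ hi) (by linarith [h.pos]) (by linarith)
    (by linarith [h.pos])]
  exact h.left_mass i hi

theorem integral_signedWeight_le (h : SignMargin a T m α β d) (μ : ℝ) (hi : i < m) :
    ∫ t in (α i)..(β i), signedWeight a μ t ≤ ∫ t in (0 : ℝ)..T, |a t| := by
  have hlt := (h.left_lt hi).le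
  rw [integral_congr_of_ae_Icc (h.signedWeight_ae_eq μ hi) le_rfl hlt le_rfl]
  exact intervalIntegral.integral_mono_interval (h.left_nonneg i hi) hlt (h.right_le i hi)
    (Eventually.of_forall fun t => abs_nonneg (a t)) (h.intervalIntegrable 0 T).abs

theorem le_integral_neg_signedWeight (h : SignMargin a T m α β d) (hμ : 0 ≤ μ) (hi : i < m) :
    μ * d ≤ ∫ t in (β i + d)..(α (i + 1) - d), -signedWeight a μ t := by
  have hgap := h.right_gap i hi
  rw [integral_congr_of_ae_Icc (h.neg_signedWeight_ae_eq μ hi) (by linarith [h.pos]) (by linarith)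
    (by linarith [h.pos]), intervalIntegral.integral_const_mul]
  exact mul_le_mul_of_nonneg_left (h.right_mass i hi) hμ

theorem lt_of_nonneg (h : SignMargin a T m α β d) (hG : Thresholds G T A d r R)
    (htr : IsTrajectory (signedWeight a μ) G u v) (hi : i < m)
    (hnonneg : ∀ t ∈ Icc (α i) (β i), 0 ≤ u t) : ∀ t ∈ Icc (α i) (β i), u t < R := by
  obtain ⟨K, s₀, hK₀, hK, hs₀, hR, hGK⟩ := hG.steep
  have hlen : β i - α i ≤ T := by linarith [h.left_nonneg i hi, h.right_le i hi]
  refine htr.lt_of_superlinear (intervalIntegrable_signedWeight h.intervalIntegrable μ)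
    hG.isAdmissible h.pos (h.left_gap i hi) (h.signedWeight_nonneg μ hi) hK₀ ?_ hGK
    (hG.r_pos.trans hG.r_lt) ((mul_le_mul_of_nonneg_left hlen hs₀).trans hR) hnonneg
  calc 2 * (β i - α i) ≤ 2 * T := by linarith
    _ < K * d * d ^ 2 := by linarith
    _ ≤ K * (∫ t in (α i + d)..(β i - d), signedWeight a μ t) * d ^ 2 := by
        gcongr; exact h.le_integral_signedWeight μ hi

theorem le_of_max_eq (h : SignMargin a T m α β d)
    (hG : Thresholds G T (∫ t in (0 : ℝ)..T, |a t|) d r R) (hκ : 0 ≤ κ)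
    (hGκ : ∀ s, r / 2 ≤ s → κ ≤ G s) (hμ : 0 ≤ μ) (hμR : R ≤ d * (κ * (μ * d)))
    (htr : IsTrajectory (signedWeight a μ) G u v) (hi : i < m) (hv : 0 ≤ v (α i))
    (hur : ∀ t ∈ Icc (α i) (β i), u t ≤ r) (hr : ∃ t ∈ Icc (α i) (β i), u t = r) :
    R ≤ u (α (i + 1)) := by
  have hq := intervalIntegrable_signedWeight h.intervalIntegrable μ
  obtain ⟨E, hE, hGE⟩ := hG.flat
  set e := E * ∫ t in (0 : ℝ)..T, |a t|
  have hE₀ : 0 ≤ E := (hG.isAdmissible.nonneg r).trans (hGE r le_rfl)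
  have hdT := h.margin_le_period hi
  have he₀ : 0 ≤ e := mul_nonneg hE₀ <| intervalIntegral.integral_nonneg (h.pos.le.trans hdT)
    fun t _ => abs_nonneg (a t)
  obtain ⟨hvβ, huβ⟩ := htr.le_end_of_max_eq hq hG.isAdmissible (h.signedWeight_nonneg μ hi) hGE he₀
    (mul_le_mul_of_nonneg_left (h.integral_signedWeight_le μ hi) hE₀) hv hur hr
  have hlen : e * (β i - α i) + e * (α (i + 1) - β i) ≤ e * T := by
    rw [← mul_add]
    exact mul_le_mul_of_nonneg_left (by linarith [h.left_nonneg i hi, h.succ_le i hi]) he₀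
  have hend := htr.le_end_of_neg_weight hq hG.isAdmissible h.pos.le (h.right_gap i hi).le
    (h.signedWeight_nonpos hμ hi) hGκ he₀ hvβ (by linarith [hG.r_pos])
  have hκd : d * (κ * (μ * d)) ≤
      d * (κ * ∫ t in (β i + d)..(α (i + 1) - d), -signedWeight a μ t) := by
    have := h.pos.le
    gcongr
    exact h.le_integral_neg_signedWeight hμ hi
  have hde : d * e ≤ e * T := by
    rw [mul_comm]; exact mul_le_mul_of_nonneg_left hdT he₀
  linarith [hG.r_pos]

theorem le_of_vel_nonpos (h : SignMargin a T m α β d) (hG : IsAdmissible G) (hr : 0 ≤ r)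
    (hκ : 0 ≤ κ) (hGκ : ∀ s, r / 2 ≤ s → κ ≤ G s) (hμ : 0 ≤ μ) (hμR : R ≤ d * (κ * (μ * d)))
    (htr : IsTrajectory (signedWeight a μ) G u v) (hi : i < m) (hv : v (α (i + 1)) ≤ 0)
    (hu : r / 2 ≤ u (α (i + 1))) : R ≤ u (β i) := by
  have hstart := htr.le_start_of_neg_weight (intervalIntegrable_signedWeight h.intervalIntegrable μ)
    hG h.pos.le (h.right_gap i hi).le (h.signedWeight_nonpos hμ hi) hGκ hv hu
  have hκd : d * (κ * (μ * d)) ≤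
      d * (κ * ∫ t in (β i + d)..(α (i + 1) - d), -signedWeight a μ t) := by
    have := h.pos.le
    gcongr
    exact h.le_integral_neg_signedWeight hμ hi
  linarith

theorem le_of_vel_le (h : SignMargin a T m α β d) (hG : IsAdmissible G) (hμ : 0 ≤ μ) {Y : ℝ}
    (hY : 0 ≤ Y) (hYR : R ≤ Y * d) (htr : IsTrajectory (signedWeight a μ) G u v) (hi : i < m)
    (hv : v (α (i + 1)) ≤ -(Y / 2)) (hu : 0 ≤ u (α (i + 1))) : R ≤ u (β i) := by
  have hlt := (h.right_lt hi).le
  have hchord := tangent_le_of_monotoneOn htr.hasDerivAt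
    (htr.monotoneOn_vel hG.nonneg (h.signedWeight_nonpos hμ hi)) (right_mem_Icc.2 hlt)
    (left_mem_Icc.2 hlt)
  nlinarith [h.right_gap i hi]

theorem vel_lt (h : SignMargin a T m α β d) (hG : IsAdmissible G) (hR : 0 ≤ R) {B : ℝ}
    (hB : 0 ≤ B) (hGB : ∀ s < R, G s ≤ B) (htr : IsTrajectory (signedWeight a μ) G u v) (hi : i < m)
    (hu : 0 ≤ u (β i)) (huR : ∀ t ∈ Icc (β i) (α (i + 1)), u t < R) :
    v (α (i + 1)) < R / d + B * ∫ t in (0 : ℝ)..T, |signedWeight a μ t| := by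
  have hq := intervalIntegrable_signedWeight h.intervalIntegrable μ
  have hlt := h.right_lt hi
  have hd := h.pos
  calc v (α (i + 1))
      < R / (α (i + 1) - β i) + B * ∫ t in (β i)..(α (i + 1)), |signedWeight a μ t| :=
        htr.vel_end_lt hq hG.nonneg hlt hGB hu huR
    _ ≤ R / d + B * ∫ t in (0 : ℝ)..T, |signedWeight a μ t| := by
        gcongr
        · linarith [h.right_gap i hi]
        · exact intervalIntegral.integral_mono_interval (h.right_nonneg i hi) hlt.le
            (h.succ_le i hi) (Eventually.of_forall fun t => abs_nonneg _) (hq 0 T).abs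

theorem exists_barriers (h : SignMargin a T m α β d) (hT : 0 ≤ T)
    (hG : Thresholds G T (∫ t in (0 : ℝ)..T, |a t|) d r R) :
    ∃ μstar, 0 < μstar ∧ ∀ μ, μstar < μ → ∃ Y, Barriers (signedWeight a μ) G m α β r R Y := by
  have hd := h.pos
  have hR : 0 < R := hG.r_pos.trans hG.r_lt
  obtain ⟨κ, hκ, hGκ⟩ := hG.exists_pos_le
  obtain ⟨B, hB, hGB⟩ := hG.isAdmissible.exists_forall_lt_le hR.le
  refine ⟨R / (d * (κ * d)), by positivity, fun μ hμR => ?_⟩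
  have hμ : 0 ≤ μ := le_trans (by positivity) hμR.le
  replace hμR : R ≤ d * (κ * (μ * d)) := by
    rw [div_lt_iff₀ (by positivity)] at hμR
    linarith
  have hmass : 0 ≤ B * ∫ t in (0 : ℝ)..T, |signedWeight a μ t| :=
    mul_nonneg hB (intervalIntegral.integral_nonneg hT fun t _ => abs_nonneg _)
  have hRd : 0 < R / d := by positivity
  refine ⟨R / d + B * ∫ t in (0 : ℝ)..T, |signedWeight a μ t|, {
    intervalIntegrable := intervalIntegrable_signedWeight h.intervalIntegrable μ
    isAdmissible := hG.isAdmissible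
    r_pos := hG.r_pos
    r_lt := hG.r_lt
    Y_pos := by linarith
    left_lt := fun i => h.left_lt
    right_lt := fun i => h.right_lt
    weight_nonneg := fun i => h.signedWeight_nonneg μ
    weight_nonpos := fun i => h.signedWeight_nonpos hμ
    lt_of_nonneg := fun htr i => h.lt_of_nonneg hG htr
    le_of_max_eq := fun htr i => h.le_of_max_eq hG hκ.le hGκ hμ hμR htr
    le_of_vel_nonpos := fun htr i =>
      h.le_of_vel_nonpos hG.isAdmissible hG.r_pos.le hκ.le hGκ hμ hμR htr
    le_of_vel_le := fun htr i => h.le_of_vel_le hG.isAdmissible hμ (by linarith) ?_ htr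
    vel_lt := fun htr i => h.vel_lt hG.isAdmissible hR.le hB hGB htr }⟩
  rw [add_mul, div_mul_cancel₀ R hd.ne']
  linarith [mul_nonneg hmass hd.le]

end SignMargin

open scoped Topology

theorem exists_forall_mul_le {g : ℝ → ℝ} (htop : Tendsto (fun s => g s / s) atTop atTop) (K : ℝ) :
    ∃ s₀, 0 < s₀ ∧ ∀ s, s₀ ≤ s → K * s ≤ g s := by
  obtain ⟨s₁, hs₁⟩ := eventually_atTop.1 (htop.eventually_ge_atTop K)
  exact ⟨max s₁ 1, lt_max_of_lt_right one_pos, fun s hs =>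
    (le_div_iff₀ (one_pos.trans_le ((le_max_right _ _).trans hs))).1
      (hs₁ s ((le_max_left _ _).trans hs))⟩

theorem exists_forall_le_mul {g : ℝ → ℝ} (hg₀ : g 0 = 0)
    (hzero : Tendsto (fun s => g s / s) (𝓝[>] 0) (𝓝 0)) {ε : ℝ} (hε : 0 < ε) :
    ∃ r, 0 < r ∧ ∀ s ∈ Icc 0 r, g s ≤ ε * s := by
  obtain ⟨r, hr, hgr⟩ := mem_nhdsGT_iff_exists_Ioc_subset.1 (hzero.eventually_le_const hε)
  refine ⟨r, hr, fun s hs => ?_⟩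
  rcases hs.1.eq_or_lt with rfl | hs₀
  · rw [hg₀, mul_zero]
  · exact (div_le_iff₀ hs₀).1 (hgr ⟨hs₀, hs.2⟩)

theorem exists_thresholds {g : ℝ → ℝ} (hlip : LocallyLipschitzOn (Ici 0) g) (hg₀ : g 0 = 0)
    (hpos : ∀ s, 0 < s → 0 < g s) (hzero : Tendsto (fun s => g s / s) (𝓝[>] 0) (𝓝 0))
    (htop : Tendsto (fun s => g s / s) atTop atTop) {T A d : ℝ} (hT : 0 ≤ T) (hA : 0 ≤ A)
    (hd : 0 < d) : ∃ r R, Thresholds (linearTruncation g R) T A d r R := by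
  have hg : ∀ s, 0 ≤ s → 0 ≤ g s := fun s hs => by
    rcases hs.eq_or_lt with rfl | hs
    exacts [hg₀.ge, (hpos s hs).le]
  obtain ⟨s₀, hs₀, hgK⟩ := exists_forall_mul_le htop ((2 * T + 1) / d ^ 3)
  obtain ⟨r₀, hr₀, hgε⟩ := exists_forall_le_mul hg₀ hzero (ε := 1 / (4 * (A * T + 1)))
    (by positivity)
  set R := max s₀ (s₀ * T / d)
  set r := min r₀ (R / 2)
  have hR : 0 < R := lt_max_of_lt_left hs₀
  have hr : 0 < r := lt_min hr₀ (half_pos hR)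
  have hrR : r < R := (min_le_right _ _).trans_lt (half_lt_self hR)
  refine ⟨r, R, isAdmissible_linearTruncation hR.le hlip hg₀ hg, hr, hrR,
    ⟨_, s₀, by positivity, ?_, hs₀.le, (div_le_iff₀' hd).1 (le_max_right _ _), fun s =>
      mul_le_linearTruncation hs₀ (le_max_left _ _) hgK⟩,
    ⟨1 / (4 * (A * T + 1)) * r, ?_, fun s hs => ?_⟩,
    exists_pos_le_linearTruncation hlip.continuousOn hpos (half_pos hr) (by linarith)⟩
  · rw [div_mul_cancel₀ _ (by positivity)]
    linarith
  · field_simp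
    linarith
  · rw [linearTruncation_of_le (hs.trans hrR.le)]
    have hmem : max 0 s ∈ Icc 0 r := ⟨le_max_left _ _, max_le hr.le hs⟩
    exact (hgε _ ⟨hmem.1, hmem.2.trans (min_le_left _ _)⟩).trans (by gcongr; exact hmem.2)

end Barriers

section PeriodicSolutions

open scoped Topology

theorem IsTrajectory.isSol {q G u v : ℝ → ℝ} {F : ℝ → ℝ → ℝ} (h : IsTrajectory q G u v)
    (hq : ∀ a b, IntervalIntegrable q volume a b) (hG : Continuous G)
    (hF : ∀ t, F t (u t) = q t * G (u t)) : IsSol F u := by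
  refine ⟨v, h.hasDerivAt, ?_, fun t => ?_⟩ <;> simp only [hF]
  · exact locallyIntegrable_of_intervalIntegrable
      (intervalIntegrable_mul_comp hq hG h.continuous_pos)
  · linarith [h.vel_sub 0 t]

theorem Barriers.exists_periodic_trajectory {q G : ℝ → ℝ} {m : ℕ} {α β : ℕ → ℝ} {r R Y T : ℝ}
    (hb : Barriers q G m α β r R Y) (hT : 0 < T) (hα : α m = α 0 + T)
    (hqT : Function.Periodic q T) {S : Set ℕ} (hS : ∃ k < m, k ∈ S) :
    ∃ u v, IsTrajectory q G u v ∧ Function.Periodic u T ∧ (∀ t, 0 < u t ∧ u t < R) ∧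
      ∀ k < m, (∃ t ∈ Icc (α k) (β k), r < u t) ↔ k ∈ S := by
  obtain ⟨u, v, huv, hu, hv, hbound, hS'⟩ := hb.exists_closed_trajectory hS
  rw [hα] at hu hv hbound
  have hper : Function.Periodic u T :=
    huv.periodic hb.intervalIntegrable hb.isAdmissible hqT hu hv
  have hbound' : ∀ t, 0 ≤ u t ∧ u t < R := fun t => by
    obtain ⟨s, hs, hts⟩ := hper.exists_mem_Ico hT t (α 0)
    exact hts ▸ hbound s (Ico_subset_Icc_self hs)
  obtain ⟨t₀, hrt₀⟩ : ∃ t, r < u t := by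
    obtain ⟨k, hk, hkS⟩ := hS
    obtain ⟨t, -, ht⟩ := (hS' k hk).1 hkS
    exact ⟨t, ht⟩
  have hpos := huv.pos hb.intervalIntegrable hb.isAdmissible (fun t => (hbound' t).1)
    (hb.r_pos.trans hrt₀)
  refine ⟨u, v, huv, hper, fun t => ⟨hpos t, (hbound' t).2⟩, fun k hk => ⟨?_, (hS' k hk).1⟩⟩
  rintro ⟨t, ht, hrt⟩
  by_contra hkS
  exact ((hS' k hk).2 hkS t ht).not_gt hrt

theorem exists_finset_of_forall_subset {X : Type*} [Nonempty X] {m : ℕ} {P : X → Prop}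
    {Q : X → ℕ → Prop}
    (h : ∀ S : Set ℕ, (∃ k < m, k ∈ S) → ∃ x, P x ∧ ∀ k < m, Q x k ↔ k ∈ S) :
    ∃ U : Finset X, 2 ^ m - 1 ≤ U.card ∧ ∀ x ∈ U, P x := by
  classical
  choose! f hP hQ using h
  set N := (Finset.range m).powerset.erase ∅
  have hN : ∀ S ∈ N, ∃ k < m, k ∈ (S : Set ℕ) := fun S hS => by
    obtain ⟨hne, hsub⟩ := Finset.mem_erase.1 hS
    obtain ⟨k, hk⟩ := Finset.nonempty_iff_ne_empty.2 hne
    exact ⟨k, Finset.mem_range.1 (Finset.mem_powerset.1 hsub hk), hk⟩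
  have hlt : ∀ S ∈ N, ∀ k ∈ S, k < m := fun S hS k hk =>
    Finset.mem_range.1 (Finset.mem_powerset.1 (Finset.mem_of_mem_erase hS) hk)
  have hinj : InjOn (fun S : Finset ℕ => f S) N := fun S hS S' hS' hSS' => by
    have hiff : ∀ k < m, k ∈ S ↔ k ∈ S' := fun k hk => by
      rw [← Finset.mem_coe, ← Finset.mem_coe, ← hQ S (hN S hS) k hk, ← hQ S' (hN S' hS') k hk]
      exact iff_of_eq (congrArg (Q · k) hSS')
    ext k
    exact ⟨fun hk => (hiff k (hlt S hS k hk)).1 hk, fun hk => (hiff k (hlt S' hS' k hk)).2 hk⟩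
  refine ⟨N.image fun S : Finset ℕ => f S, ?_, Finset.forall_mem_image.2 fun S hS => hP S (hN S hS)⟩
  rw [Finset.card_image_of_injOn hinj, Finset.card_erase_of_mem (Finset.empty_mem_powerset _),
    Finset.card_powerset, Finset.card_range]

theorem tendsto_div_derivWithin_Ici {g : ℝ → ℝ} (hg₀ : g 0 = 0)
    (hg : DifferentiableWithinAt ℝ g (Ici 0) 0) :
    Tendsto (fun s => g s / s) (𝓝[>] 0) (𝓝 (derivWithin g (Ici 0) 0)) := by
  simpa [slope_fun_def_field, hg₀] using
    hasDerivWithinAt_iff_tendsto_slope.1 hg.hasDerivWithinAt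

theorem stmt3_general {T : ℝ} (hT : 0 < T) {a : ℝ → ℝ} (ha : Function.Periodic a T)
    (hloc : LocallyIntegrable a volume) {m : ℕ} (hsign : SignCond a T m) {g : ℝ → ℝ}
    (hlip : LocallyLipschitzOn (Ici 0) g) (hg₀ : g 0 = 0) (hpos : ∀ s, 0 < s → 0 < g s)
    (hzero : Tendsto (fun s => g s / s) (𝓝[>] 0) (𝓝 0))
    (htop : Tendsto (fun s => g s / s) atTop atTop) :
    ∃ μstar : ℝ, 0 < μstar ∧ ∀ μ : ℝ, μstar < μ →
      ∃ U : Finset (ℝ → ℝ), 2 ^ m - 1 ≤ U.card ∧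
        ∀ u ∈ U,
          IsSol (fun t s => (max (a t) 0 - μ * max (-a t) 0) * g s) u ∧
          (∀ t, 0 < u t) ∧ Function.Periodic u T := by
  obtain ⟨α, β, d, hα₀, hαm, hmargin⟩ := hsign.exists_signMargin fun x y =>
    (hloc.integrableOn_isCompact isCompact_uIcc).intervalIntegrable
  obtain ⟨r, R, hG⟩ := exists_thresholds hlip hg₀ hpos hzero htop hT.le
    (intervalIntegral.integral_nonneg hT.le fun t _ => abs_nonneg (a t)) hmargin.pos
  obtain ⟨μstar, hμstar, hbarriers⟩ := hmargin.exists_barriers hT.le hG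
  refine ⟨μstar, hμstar, fun μ hμ => ?_⟩
  obtain ⟨Y, hb⟩ := hbarriers μ hμ
  refine exists_finset_of_forall_subset
    (Q := fun u k => ∃ t ∈ Icc (α k) (β k), r < u t) fun S hS => ?_
  obtain ⟨u, v, huv, hper, hbound, hQ⟩ := hb.exists_periodic_trajectory hT
    (by rw [hαm, hα₀, zero_add]) (periodic_signedWeight ha μ) hS
  have hsol := huv.isSol (F := fun t s => signedWeight a μ t * g s) hb.intervalIntegrable
    hb.isAdmissible.continuous fun t => by
      rw [linearTruncation_of_mem ⟨(hbound t).1.le, (hbound t).2.le⟩]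
  exact ⟨u, ⟨hsol, fun t => (hbound t).1, hper⟩, hQ⟩

end PeriodicSolutions

/-- Theorem 2.2: for `μ` large, `u'' + (a⁺(t) - μ a⁻(t)) g(u) = 0` has at
least `2^m - 1` distinct positive `T`-periodic solutions. -/
theorem stmt3 (T : ℝ) (hT : 0 < T) (a : ℝ → ℝ)
    (haper : Function.Periodic a T)
    (haloc : MeasureTheory.LocallyIntegrable a MeasureTheory.volume)
    (m : ℕ) (hm : 1 ≤ m) (hasign : SignCond a T m)
    (g : ℝ → ℝ) (hgC1 : ContDiffOn ℝ 1 g (Set.Ici 0))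
    (hg0 : g 0 = 0) (hgpos : ∀ s : ℝ, 0 < s → 0 < g s)
    (hg'0 : derivWithin g (Set.Ici 0) 0 = 0)
    (hgsup : Filter.Tendsto (fun s => g s / s) Filter.atTop Filter.atTop) :
    ∃ μstar : ℝ, 0 < μstar ∧ ∀ μ : ℝ, μstar < μ →
      ∃ U : Finset (ℝ → ℝ), 2 ^ m - 1 ≤ U.card ∧
        ∀ u ∈ U,
          IsSol (fun t s => (max (a t) 0 - μ * max (-a t) 0) * g s) u ∧
          (∀ t, 0 < u t) ∧ Function.Periodic u T := by
  have hzero := tendsto_div_derivWithin_Ici hg0 (hgC1.differentiableOn one_ne_zero 0 self_mem_Ici)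
  exact stmt3_general hT haper haloc hasign (hgC1.locallyLipschitzOn (convex_Ici 0)) hg0 hgpos
    (by rwa [hg'0] at hzero) hgsup
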